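/- arXiv:math-ph/0309065 — 5 statements merged into one kernel-verified Lean document; each statement's English description precedes it below -/
import Mathlib

section
/- For every smooth compactly supported spinor φ : ℝ³ → ℂ², one has ∫_{ℝ³} |x| |(σ·∇)φ(x)|² dx ≥ ∫_{ℝ³} |φ(x)|²/|x| dx. -/
/-!
Write `r = ‖x‖`, `L = x × ∇` (the real form, without the factor `-i`) and split `φ` into four real
functions `a, b, c, d`. With `u = |φ|²`, the proof rests on the pointwise identity, for `x ≠ 0`,

`r |(σ·∇)φ|² - u / r = |(x·∇)φ + φ|² / r + (2 |Lφ|² - |(σ·L)φ|²) / r - (x·∇u + 2u) / r + Z`,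

where `Z` is a linear combination of the Jacobian determinants `∇(r x_k) · (∇f × ∇g)` with `f, g`
among `a, b, c, d`. The four terms on the right are treated separately.

* The first is a square.
* The second is nonnegative (`twist`): `Lφ` is tangential, i.e. `x·Lφ = 0`, and the component of a
  tangential spinor-valued vector along the two-dimensional Clifford action has at most half of its
  squared norm. This is the twistor decomposition behind Friedrich's inequality on the sphere, and it
  replaces the computation of the spectrum of `σ·L`.
* The third is minus the divergence of `u x / r`, and `∫ div (u x / r) ≤ 0`
  (`integral_eul_div_le`) follows by regularising `r` to `√(r² + ε)`.
* The fourth integrates to zero (`integral_jac`): `∇f × ∇g` is divergence free with compact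
  support and `r x_k` is differentiable everywhere.

If `u / r` were not integrable, the right-hand integral would be `0` by convention and the claim
trivial, so its integrability does not have to be proved.
-/

open MeasureTheory Real Filter Set

noncomputable section

abbrev E3 := EuclideanSpace ℝ (Fin 3)

/-- `i`-th partial derivative of a spinor field. -/
def pd (i : Fin 3) (φ : E3 → ℂ × ℂ) (x : E3) : ℂ × ℂ :=
  fderiv ℝ φ x (EuclideanSpace.single i 1)

/-- The operator `σ·∇` built from the Pauli matrices. -/
def sigmaGrad (φ : E3 → ℂ × ℂ) (x : E3) : ℂ × ℂ :=
  ((pd 2 φ x).1 + (pd 0 φ x).2 - Complex.I * (pd 1 φ x).2,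
   (pd 0 φ x).1 + Complex.I * (pd 1 φ x).1 - (pd 2 φ x).2)

/-- Squared norm of a two-spinor value. -/
def nsq (p : ℂ × ℂ) : ℝ := ‖p.1‖ ^ 2 + ‖p.2‖ ^ 2

/-- Pauli matrix `σ₁` acting on `ℂ²`. -/
def pauli1 (p : ℂ × ℂ) : ℂ × ℂ := (p.2, p.1)

/-- Pauli matrix `σ₂` acting on `ℂ²`. -/
def pauli2 (p : ℂ × ℂ) : ℂ × ℂ := (-(Complex.I * p.2), Complex.I * p.1)

/-- Pauli matrix `σ₃` acting on `ℂ²`. -/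
def pauli3 (p : ℂ × ℂ) : ℂ × ℂ := (p.1, -p.2)

/-- The spin-orbit operator `σ·L`. -/
def sigmaL (φ : E3 → ℂ × ℂ) (x : E3) : ℂ × ℂ :=
  (-Complex.I) •
    (pauli1 ((x 1 : ℂ) • pd 2 φ x - (x 2 : ℂ) • pd 1 φ x) +
     pauli2 ((x 2 : ℂ) • pd 0 φ x - (x 0 : ℂ) • pd 2 φ x) +
     pauli3 ((x 0 : ℂ) • pd 1 φ x - (x 1 : ℂ) • pd 0 φ x))

/-- `σ·x = σ₁x₁ + σ₂x₂ + σ₃x₃` acting on a spinor value. -/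
def sigmaDotX (x : E3) (p : ℂ × ℂ) : ℂ × ℂ :=
  ((x 2 : ℂ) * p.1 + ((x 0 : ℂ) - Complex.I * (x 1 : ℂ)) * p.2,
   ((x 0 : ℂ) + Complex.I * (x 1 : ℂ)) * p.1 - (x 2 : ℂ) * p.2)

/-- Inequality (R8) for a weight `W`, a radius `R` and a constant `C`. -/
def IneqR8 (W : ℝ → ℝ) (R C : ℝ) : Prop :=
  ∀ φ : E3 → ℂ × ℂ, ContDiff ℝ (⊤ : ℕ∞) φ → HasCompactSupport φ →
    (∫ x : E3, (W ‖x‖ / ‖x‖) * nsq (φ x)) +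
        C * (∫ x in Metric.sphere (0 : E3) R, nsq (φ x) ∂μH[2]) ≤
      ∫ x : E3, (nsq (sigmaGrad φ x) / (1 + W ‖x‖ / ‖x‖) + nsq (φ x))

/-- Iterated logarithmic functions: `Xk a 1 = (a - log s)⁻¹`, `Xk a (k+1) = X₁ ∘ Xk a k`. -/
def Xk (a : ℝ) : ℕ → ℝ → ℝ
  | 0, s => s
  | k + 1, s => (a - Real.log (Xk a k s))⁻¹

/-- `π_j(s) = X₁(s)⋯X_j(s)`. -/
def piX (a : ℝ) (j : ℕ) (s : ℝ) : ℝ := ∏ i ∈ Finset.Icc 1 j, Xk a i s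

/-- `Σ_{j=1}^k X₁(s)²⋯X_j(s)²`. -/
def sumX2 (a : ℝ) (k : ℕ) (s : ℝ) : ℝ := ∑ j ∈ Finset.Icc 1 k, (piX a j s) ^ 2

/-! ### Partial derivatives of real functions -/

/-- `i`-th partial derivative of a real function. -/
def dd (i : Fin 3) (f : E3 → ℝ) (x : E3) : ℝ := fderiv ℝ f x (EuclideanSpace.single i 1)

theorem contDiff_dd {f : E3 → ℝ} (hf : ContDiff ℝ (⊤ : ℕ∞) f) (i : Fin 3) :
    ContDiff ℝ (⊤ : ℕ∞) (dd i f) :=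
  (hf.fderiv_right (m := (⊤ : ℕ∞)) (by simp)).clm_apply contDiff_const

theorem hasCompactSupport_dd {f : E3 → ℝ} (hf : HasCompactSupport f) (i : Fin 3) :
    HasCompactSupport (dd i f) := hf.fderiv_apply ℝ _

theorem dd_comm {f : E3 → ℝ} (hf : ContDiff ℝ (⊤ : ℕ∞) f) (i j : Fin 3) (x : E3) :
    dd i (dd j f) x = dd j (dd i f) x := by
  have hs : IsSymmSndFDerivAt ℝ f x :=
    hf.contDiffAt.isSymmSndFDerivAt (by simp; exact WithTop.coe_le_coe.2 (le_top : (2 : ℕ∞) ≤ ⊤))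
  have hd : DifferentiableAt ℝ (fderiv ℝ f) x :=
    ((hf.fderiv_right (m := (⊤ : ℕ∞)) (by simp)).differentiable (by simp)) x
  have key : ∀ i j : Fin 3, dd i (dd j f) x =
      fderiv ℝ (fderiv ℝ f) x (EuclideanSpace.single i 1) (EuclideanSpace.single j 1) := by
    intro i j
    change fderiv ℝ (fun y => fderiv ℝ f y (EuclideanSpace.single j 1)) x _ = _
    rw [fderiv_clm_apply hd (differentiableAt_const _)]
    simp
  rw [key, key]; exact hs _ _

theorem dd_mul {f g : E3 → ℝ} (hf : ContDiff ℝ (⊤ : ℕ∞) f) (hg : ContDiff ℝ (⊤ : ℕ∞) g)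
    (i : Fin 3) (x : E3) :
    dd i (fun y => f y * g y) x = f x * dd i g x + dd i f x * g x := by
  unfold dd
  rw [fderiv_fun_mul (hf.differentiable (by simp) x) (hg.differentiable (by simp) x)]
  simp [mul_comm]

theorem dd_sub {f g : E3 → ℝ} (hf : ContDiff ℝ (⊤ : ℕ∞) f) (hg : ContDiff ℝ (⊤ : ℕ∞) g)
    (i : Fin 3) (x : E3) :
    dd i (fun y => f y - g y) x = dd i f x - dd i g x := by
  unfold dd
  rw [fderiv_fun_sub (hf.differentiable (by simp) x) (hg.differentiable (by simp) x)]
  simp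

theorem dd_add {f g : E3 → ℝ} (hf : ContDiff ℝ (⊤ : ℕ∞) f) (hg : ContDiff ℝ (⊤ : ℕ∞) g)
    (i : Fin 3) (x : E3) :
    dd i (fun y => f y + g y) x = dd i f x + dd i g x := by
  unfold dd
  rw [fderiv_fun_add (hf.differentiable (by simp) x) (hg.differentiable (by simp) x)]
  simp

/-! ### Jacobian determinants -/

/-- The minor `∂ᵢf ∂ⱼg - ∂ⱼf ∂ᵢg`, a component of `∇f × ∇g`. -/
def minor (f g : E3 → ℝ) (i j : Fin 3) (x : E3) : ℝ := dd i f x * dd j g x - dd j f x * dd i g x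

theorem contDiff_minor {f g : E3 → ℝ} (hf : ContDiff ℝ (⊤ : ℕ∞) f) (hg : ContDiff ℝ (⊤ : ℕ∞) g)
    (i j : Fin 3) : ContDiff ℝ (⊤ : ℕ∞) (minor f g i j) :=
  ((contDiff_dd hf i).mul (contDiff_dd hg j)).sub ((contDiff_dd hf j).mul (contDiff_dd hg i))

theorem hasCompactSupport_minor {f g : E3 → ℝ} (hf : HasCompactSupport f) (i j : Fin 3) :
    HasCompactSupport (minor f g i j) :=
  ((hasCompactSupport_dd hf i).mul_right).sub ((hasCompactSupport_dd hf j).mul_right)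

/-- `div (∇f × ∇g) = 0`. -/
theorem div_minor {f g : E3 → ℝ} (hf : ContDiff ℝ (⊤ : ℕ∞) f) (hg : ContDiff ℝ (⊤ : ℕ∞) g)
    (x : E3) :
    dd 0 (minor f g 1 2) x + dd 1 (minor f g 2 0) x + dd 2 (minor f g 0 1) x = 0 := by
  have key : ∀ i j k : Fin 3, dd i (minor f g j k) x =
      dd j f x * dd i (dd k g) x + dd i (dd j f) x * dd k g x
      - (dd k f x * dd i (dd j g) x + dd i (dd k f) x * dd j g x) := by
    intro i j k
    have := dd_sub ((contDiff_dd hf j).mul (contDiff_dd hg k))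
      ((contDiff_dd hf k).mul (contDiff_dd hg j)) i x
    rw [dd_mul (contDiff_dd hf j) (contDiff_dd hg k),
      dd_mul (contDiff_dd hf k) (contDiff_dd hg j)] at this
    exact this
  rw [key, key, key, dd_comm hf 1 0, dd_comm hf 2 0, dd_comm hf 2 1,
    dd_comm hg 1 0, dd_comm hg 2 0, dd_comm hg 2 1]
  ring

/-- The partial derivative `∂ₗ(‖x‖ x_k)`. At the origin, division by zero gives the correct value `0`. -/
def hgrad (k l : Fin 3) (x : E3) : ℝ := (if k = l then ‖x‖ else 0) + x k * x l / ‖x‖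

theorem abs_coord_le (x : E3) (i : Fin 3) : |x i| ≤ ‖x‖ := by
  simpa using PiLp.norm_apply_le x i

theorem abs_hgrad_le (k l : Fin 3) (x : E3) : |hgrad k l x| ≤ 2 * ‖x‖ := by
  unfold hgrad
  have h1 : |x k * x l / ‖x‖| ≤ ‖x‖ := by
    rw [abs_div, abs_mul, abs_norm]
    apply div_le_of_le_mul₀ (norm_nonneg _) (norm_nonneg _)
    gcongr <;> apply abs_coord_le
  have h2 : |if k = l then ‖x‖ else 0| ≤ ‖x‖ := by
    split_ifs <;> simp
  exact (abs_add_le _ _).trans (by linarith)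

/-- The function `‖x‖ x_k` is differentiable at the origin too, being quadratically small there. -/
theorem hasLineDerivAt_h (k l : Fin 3) (x : E3) :
    HasLineDerivAt ℝ (fun y : E3 => ‖y‖ * y k) (hgrad k l x) x (EuclideanSpace.single l 1) := by
  have hc : ∀ x : E3, HasFDerivAt (fun y : E3 => y k)
      (EuclideanSpace.proj k : E3 →L[ℝ] ℝ) x := fun x =>
    (EuclideanSpace.proj k : E3 →L[ℝ] ℝ).hasFDerivAt
  rcases eq_or_ne x 0 with rfl | hx
  · have : HasFDerivAt (fun y : E3 => ‖y‖ * y k) (0 : E3 →L[ℝ] ℝ) 0 := by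
      refine Asymptotics.IsBigO.hasFDerivAt (n := 2) ?_ (by norm_num)
      refine Asymptotics.IsBigO.of_bound 1 (Eventually.of_forall fun y => ?_)
      have := abs_coord_le y k
      simp only [norm_mul, Real.norm_eq_abs, sub_zero, one_mul, norm_pow, abs_norm]
      nlinarith [norm_nonneg y]
    have h2 := this.hasLineDerivAt (EuclideanSpace.single l 1)
    simpa [hgrad] using h2
  · have hn : HasFDerivAt (fun y : E3 => ‖y‖) (‖x‖⁻¹ • innerSL ℝ x) x := by
      have h1 := (hasStrictFDerivAt_norm_sq x).hasFDerivAt.sqrt (by simpa using hx)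
      simp only [Real.sqrt_sq (norm_nonneg _)] at h1
      have e : ‖x‖⁻¹ • innerSL ℝ x = (1 / (2 * ‖x‖)) • (2 : ℕ) • innerSL ℝ x := by
        rw [← Nat.cast_smul_eq_nsmul ℝ, smul_smul]
        congr 1
        push_cast
        field_simp
      rw [e]
      exact h1
    have h2 := (hn.mul (hc x)).hasLineDerivAt (EuclideanSpace.single l 1)
    have e : hgrad k l x = (‖x‖ • (EuclideanSpace.proj k : E3 →L[ℝ] ℝ) +
        x k • ‖x‖⁻¹ • innerSL ℝ x) (EuclideanSpace.single l 1) := by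
      simp [hgrad, EuclideanSpace.inner_single_right]
      ring
    rw [e]
    exact h2

theorem measurable_hgrad (k l : Fin 3) : Measurable (hgrad k l) := by
  unfold hgrad
  have : ∀ i, Measurable (fun x : E3 => x i) := fun i => by fun_prop
  split_ifs <;> fun_prop

theorem integrable_hgrad_mul (k l : Fin 3) {m : E3 → ℝ} (hm : Continuous m)
    (hs : HasCompactSupport m) : Integrable (fun x => hgrad k l x * m x) := by
  have h1 : Integrable (fun x : E3 => 2 * ‖x‖ * m x) :=
    Continuous.integrable_of_hasCompactSupport (by fun_prop) hs.mul_left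
  refine h1.mono ((measurable_hgrad k l).aestronglyMeasurable.mul hm.aestronglyMeasurable)
    (Eventually.of_forall fun x => ?_)
  simp only [norm_mul, Real.norm_eq_abs]
  have := abs_hgrad_le k l x
  gcongr
  simpa using this

theorem integral_hgrad_mul (k l : Fin 3) {m : E3 → ℝ} (hm : ContDiff ℝ (⊤ : ℕ∞) m)
    (hs : HasCompactSupport m) :
    ∫ x, hgrad k l x * m x = - ∫ x : E3, ‖x‖ * x k * dd l m x := by
  have h := integral_bilinear_hasLineDerivAt_right_eq_neg_left_of_integrable
    (μ := (volume : Measure E3)) (f := fun y : E3 => ‖y‖ * y k) (f' := hgrad k l) (g := m)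
    (g' := dd l m) (v := EuclideanSpace.single l 1) (B := ContinuousLinearMap.mul ℝ ℝ)
    (integrable_hgrad_mul k l hm.continuous hs)
    (Continuous.integrable_of_hasCompactSupport
      (by have := (contDiff_dd hm l).continuous; simp only [ContinuousLinearMap.mul_apply']; fun_prop)
      (hasCompactSupport_dd hs l).mul_left)
    (Continuous.integrable_of_hasCompactSupport
      (by have := hm.continuous; simp only [ContinuousLinearMap.mul_apply']; fun_prop) hs.mul_left)
    (fun x _ => hasLineDerivAt_h k l x)
    (fun x _ => ((hm.differentiable (by simp) x).hasFDerivAt).hasLineDerivAt _)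
  simp only [ContinuousLinearMap.mul_apply'] at h
  rw [h, neg_neg]

theorem integral_add₃ {f g h : E3 → ℝ} (hf : Integrable f) (hg : Integrable g)
    (hh : Integrable h) :
    ∫ x, (f x + g x + h x) = (∫ x, f x) + (∫ x, g x) + ∫ x, h x := by
  rw [← integral_add hf hg]
  exact integral_add (hf.add hg) hh

/-- The Jacobian determinant `∇(‖x‖ x_k) · (∇f × ∇g)`. -/
def jac (k : Fin 3) (f g : E3 → ℝ) (x : E3) : ℝ :=
  hgrad k 0 x * minor f g 1 2 x + hgrad k 1 x * minor f g 2 0 x + hgrad k 2 x * minor f g 0 1 x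

theorem integrable_jac (k : Fin 3) {f g : E3 → ℝ} (hf : ContDiff ℝ (⊤ : ℕ∞) f)
    (hg : ContDiff ℝ (⊤ : ℕ∞) g) (hs : HasCompactSupport f) : Integrable (jac k f g) :=
  ((integrable_hgrad_mul k 0 (contDiff_minor hf hg 1 2).continuous
    (hasCompactSupport_minor hs 1 2)).add
  (integrable_hgrad_mul k 1 (contDiff_minor hf hg 2 0).continuous
    (hasCompactSupport_minor hs 2 0))).add
  (integrable_hgrad_mul k 2 (contDiff_minor hf hg 0 1).continuous
    (hasCompactSupport_minor hs 0 1))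

/-- Integration by parts moves the derivative from `‖x‖ x_k` to the divergence-free field
`∇f × ∇g`. -/
theorem integral_jac (k : Fin 3) {f g : E3 → ℝ} (hf : ContDiff ℝ (⊤ : ℕ∞) f)
    (hg : ContDiff ℝ (⊤ : ℕ∞) g) (hs : HasCompactSupport f) : ∫ x, jac k f g x = 0 := by
  have I : ∀ l i j, Integrable (fun x => hgrad k l x * minor f g i j x) := fun l i j =>
    integrable_hgrad_mul k l (contDiff_minor hf hg i j).continuous (hasCompactSupport_minor hs i j)
  have I' : ∀ l i j, Integrable (fun x : E3 => ‖x‖ * x k * dd l (minor f g i j) x) := fun l i j =>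
    Continuous.integrable_of_hasCompactSupport
      (by have := (contDiff_dd (contDiff_minor hf hg i j) l).continuous; fun_prop)
      (hasCompactSupport_dd (hasCompactSupport_minor hs i j) l).mul_left
  have P : ∀ l i j, ∫ x, hgrad k l x * minor f g i j x =
      - ∫ x : E3, ‖x‖ * x k * dd l (minor f g i j) x := fun l i j =>
    integral_hgrad_mul k l (contDiff_minor hf hg i j) (hasCompactSupport_minor hs i j)
  unfold jac
  rw [integral_add₃ (I 0 1 2) (I 1 2 0) (I 2 0 1), P, P, P, ← neg_add, ← neg_add,
    ← integral_add₃ (I' 0 1 2) (I' 1 2 0) (I' 2 0 1), neg_eq_zero]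
  refine integral_eq_zero_of_ae (Eventually.of_forall fun x => ?_)
  have := div_minor hf hg x
  simp only [Pi.zero_apply]
  linear_combination (‖x‖ * x k) * this

/-! ### The radial divergence -/

/-- `x · ∇u + 2u`, which is `‖x‖` times the divergence of `u x / ‖x‖`. -/
def eul (u : E3 → ℝ) (x : E3) : ℝ :=
  x 0 * dd 0 u x + x 1 * dd 1 u x + x 2 * dd 2 u x + 2 * u x

theorem contDiff_coord (i : Fin 3) : ContDiff ℝ (⊤ : ℕ∞) (fun x : E3 => x i) :=
  (EuclideanSpace.proj i : E3 →L[ℝ] ℝ).contDiff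

theorem continuous_eul {u : E3 → ℝ} (hu : ContDiff ℝ (⊤ : ℕ∞) u) : Continuous (eul u) := by
  have := fun i => (contDiff_dd hu i).continuous
  have := hu.continuous
  unfold eul
  fun_prop

theorem hasCompactSupport_eul {u : E3 → ℝ} (hs : HasCompactSupport u) :
    HasCompactSupport (eul u) :=
  (((hasCompactSupport_dd hs 0).mul_left.add (hasCompactSupport_dd hs 1).mul_left).add
    (hasCompactSupport_dd hs 2).mul_left).add hs.mul_left

theorem ae_ne_zero : ∀ᵐ x : E3, x ≠ 0 := by
  simp [ae_iff]

theorem integrable_eul_div {u : E3 → ℝ} (hu : ContDiff ℝ (⊤ : ℕ∞) u) (hs : HasCompactSupport u)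
    (hi : Integrable fun x => u x / ‖x‖) : Integrable fun x => eul u x / ‖x‖ := by
  have I : ∀ i, Integrable (dd i u) := fun i =>
    (contDiff_dd hu i).continuous.integrable_of_hasCompactSupport (hasCompactSupport_dd hs i)
  have hb := (((I 0).abs.add (I 1).abs).add (I 2).abs).add (hi.abs.const_mul 2)
  refine hb.mono' (((continuous_eul hu).measurable.div (by fun_prop)).aestronglyMeasurable) ?_
  filter_upwards [ae_ne_zero] with x hx
  have hr : 0 < ‖x‖ := norm_pos_iff.2 hx
  have T : ∀ i, |x i / ‖x‖ * dd i u x| ≤ |dd i u x| := fun i => by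
    rw [abs_mul, abs_div, abs_norm]
    exact mul_le_of_le_one_left (abs_nonneg _) ((div_le_one hr).2 (abs_coord_le x i))
  have e : eul u x / ‖x‖ = x 0 / ‖x‖ * dd 0 u x + x 1 / ‖x‖ * dd 1 u x + x 2 / ‖x‖ * dd 2 u x
      + 2 * (u x / ‖x‖) := by
    unfold eul; field_simp
  rw [e, Real.norm_eq_abs]
  simp only [Pi.add_apply]
  have h2 : |2 * (u x / ‖x‖)| = 2 * |u x / ‖x‖| := by rw [abs_mul]; norm_num
  calc _ ≤ _ := abs_add_le _ _
    _ ≤ _ := add_le_add ((abs_add_le _ _).trans (add_le_add ((abs_add_le _ _).trans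
      (add_le_add (T 0) (T 1))) (T 2))) h2.le

/-- The regularised norm `√(‖x‖² + ε)`. -/
def rho (ε : ℝ) (x : E3) : ℝ := √(‖x‖ ^ 2 + ε)

theorem rho_pos {ε : ℝ} (hε : 0 < ε) (x : E3) : 0 < rho ε x := Real.sqrt_pos.2 (by positivity)

theorem contDiff_rho {ε : ℝ} (hε : 0 < ε) : ContDiff ℝ (⊤ : ℕ∞) (rho ε) :=
  ((contDiff_norm_sq ℝ).add contDiff_const).sqrt fun x => by positivity

theorem norm_sq_coord (x : E3) : ‖x‖ ^ 2 = x 0 ^ 2 + x 1 ^ 2 + x 2 ^ 2 := by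
  simp [EuclideanSpace.norm_sq_eq, Fin.sum_univ_three]

theorem dd_div_rho {ε : ℝ} (hε : 0 < ε) (i : Fin 3) (x : E3) :
    dd i (fun y : E3 => y i / rho ε y) x = 1 / rho ε x - x i ^ 2 / rho ε x ^ 3 := by
  have hp := rho_pos hε x
  have h1 : HasFDerivAt (rho ε) ((1 / (2 * rho ε x)) • (2 • innerSL ℝ x)) x :=
    ((hasStrictFDerivAt_norm_sq x).hasFDerivAt.add_const ε).sqrt (by positivity)
  have hc : HasFDerivAt (fun y : E3 => y i) (EuclideanSpace.proj i : E3 →L[ℝ] ℝ) x :=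
    (EuclideanSpace.proj i : E3 →L[ℝ] ℝ).hasFDerivAt
  have h2 := hc.mul ((hasDerivAt_inv hp.ne').comp_hasFDerivAt x h1)
  have h3 : HasFDerivAt (fun y : E3 => y i / rho ε y) _ x := h2
  unfold dd
  rw [h3.fderiv]
  simp [EuclideanSpace.inner_single_right]
  field_simp
  ring

/-- The divergence of `u x / ρ` with `ρ = √(‖x‖² + ε)` integrates to zero, and exceeds
`(x · ∇u + 2u) / ρ` by `ε u / ρ³ ≥ 0`. -/
theorem integral_eul_div_rho_le {u : E3 → ℝ} (hu : ContDiff ℝ (⊤ : ℕ∞) u)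
    (hs : HasCompactSupport u) (h0 : ∀ x, 0 ≤ u x) {ε : ℝ} (hε : 0 < ε) :
    ∫ x, eul u x / rho ε x ≤ 0 := by
  have hρ := (contDiff_rho hε).continuous
  have hρ0 : ∀ x, rho ε x ≠ 0 := fun x => (rho_pos hε x).ne'
  have huc := hu.continuous
  have hdc := fun i => (contDiff_dd hu i).continuous
  have cw : ∀ i, ContDiff ℝ (⊤ : ℕ∞) (fun x : E3 => x i / rho ε x) := fun i =>
    (contDiff_coord i).div (contDiff_rho hε) hρ0
  have I1 : ∀ i, Integrable (fun x : E3 => x i / rho ε x * dd i u x) := fun i =>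
    ((cw i).continuous.mul (hdc i)).integrable_of_hasCompactSupport
      (hasCompactSupport_dd hs i).mul_left
  have I2 : ∀ i, Integrable (fun x : E3 => dd i (fun y : E3 => y i / rho ε y) x * u x) := fun i =>
    ((contDiff_dd (cw i) i).continuous.mul huc).integrable_of_hasCompactSupport hs.mul_left
  have P : ∀ i, ∫ x : E3, x i / rho ε x * dd i u x =
      - ∫ x : E3, dd i (fun y : E3 => y i / rho ε y) x * u x := fun i =>
    integral_mul_fderiv_eq_neg_fderiv_mul_of_integrable (I2 i) (I1 i)
      (((cw i).continuous.mul huc).integrable_of_hasCompactSupport hs.mul_left)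
      (fun x _ => (cw i).differentiable (by simp) x) (fun x _ => hu.differentiable (by simp) x)
  have I4 : Integrable fun x => eul u x / rho ε x :=
    Continuous.integrable_of_hasCompactSupport ((continuous_eul hu).div hρ hρ0)
      (by simp only [div_eq_mul_inv]; exact (hasCompactSupport_eul hs).mul_right)
  have e : (∫ x : E3, (x 0 / rho ε x * dd 0 u x + x 1 / rho ε x * dd 1 u x +
      x 2 / rho ε x * dd 2 u x)) + ∫ x : E3, (dd 0 (fun y : E3 => y 0 / rho ε y) x * u x +
      dd 1 (fun y : E3 => y 1 / rho ε y) x * u x + dd 2 (fun y : E3 => y 2 / rho ε y) x * u x) = 0 := by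
    rw [integral_add₃ (I1 0) (I1 1) (I1 2), integral_add₃ (I2 0) (I2 1) (I2 2), P, P, P]
    ring
  have J1 := ((I1 0).add (I1 1)).add (I1 2)
  have J2 := ((I2 0).add (I2 1)).add (I2 2)
  rw [← e, ← integral_add (by exact J1) (by exact J2)]
  refine integral_mono I4 (J1.add J2) fun x => ?_
  have hp := rho_pos hε x
  have hsq : rho ε x ^ 2 = ‖x‖ ^ 2 + ε := Real.sq_sqrt (by positivity)
  simp only [dd_div_rho hε]
  have h3 : 0 ≤ ε / rho ε x ^ 3 * u x := mul_nonneg (by positivity) (h0 x)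
  have h4 : (1 / rho ε x - x 0 ^ 2 / rho ε x ^ 3) * u x + (1 / rho ε x - x 1 ^ 2 / rho ε x ^ 3) * u x
      + (1 / rho ε x - x 2 ^ 2 / rho ε x ^ 3) * u x = 2 * u x / rho ε x + ε / rho ε x ^ 3 * u x := by
    rw [norm_sq_coord] at hsq
    have : ε = rho ε x ^ 2 - (x 0 ^ 2 + x 1 ^ 2 + x 2 ^ 2) := by linarith
    generalize rho ε x = q at *
    subst this
    field_simp
    ring
  have h5 : eul u x / rho ε x = x 0 / rho ε x * dd 0 u x + x 1 / rho ε x * dd 1 u x +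
      x 2 / rho ε x * dd 2 u x + 2 * u x / rho ε x := by
    unfold eul; field_simp
  linarith

theorem integral_eul_div_le {u : E3 → ℝ} (hu : ContDiff ℝ (⊤ : ℕ∞) u)
    (hs : HasCompactSupport u) (h0 : ∀ x, 0 ≤ u x) (hi : Integrable fun x => u x / ‖x‖) :
    ∫ x, eul u x / ‖x‖ ≤ 0 := by
  have hpos : ∀ n : ℕ, (0 : ℝ) < 1 / ((n : ℝ) + 1) := fun n => by positivity
  refine le_of_tendsto' (tendsto_integral_of_dominated_convergence
    (F := fun (n : ℕ) x => eul u x / rho (1 / ((n : ℝ) + 1)) x)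
    (fun x => |eul u x / ‖x‖|) (fun n => ?_) (integrable_eul_div hu hs hi).abs (fun n => ?_) ?_)
    (fun n => integral_eul_div_rho_le hu hs h0 (hpos n))
  · exact ((continuous_eul hu).div (contDiff_rho (hpos n)).continuous
      fun x => (rho_pos (hpos n) x).ne').aestronglyMeasurable
  · filter_upwards [ae_ne_zero] with x hx
    have hr : 0 < ‖x‖ := norm_pos_iff.2 hx
    have : ‖x‖ ≤ rho (1 / ((n : ℝ) + 1)) x := Real.le_sqrt_of_sq_le (by linarith [hpos n])
    rw [Real.norm_eq_abs, abs_div, abs_div, abs_norm, abs_of_pos (rho_pos (hpos n) x)]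
    gcongr
  · filter_upwards [ae_ne_zero] with x hx
    have hr : ‖x‖ ≠ 0 := norm_ne_zero_iff.2 hx
    have h1 : Tendsto (fun n : ℕ => ‖x‖ ^ 2 + 1 / ((n : ℝ) + 1)) atTop (nhds (‖x‖ ^ 2 + 0)) :=
      tendsto_const_nhds.add tendsto_one_div_add_atTop_nhds_zero_nat
    have h2 := h1.sqrt
    rw [add_zero, Real.sqrt_sq (norm_nonneg _)] at h2
    exact tendsto_const_nhds.div h2 hr

/-! ### Pointwise algebra -/

/-- For a tangential vector `(ψ₁, ψ₂, ψ₃)` of spinors (`x·ψ = 0`), one has `|σ·ψ|² ≤ 2 |ψ|²`.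
The spinor `ψₖ` has real components `pₖ, qₖ, sₖ, tₖ`. -/
theorem twist (x y z p1 p2 p3 q1 q2 q3 s1 s2 s3 t1 t2 t3 : ℝ) (h0 : 0 < x^2+y^2+z^2)
  (hp : x*p1+y*p2+z*p3 = 0) (hq : x*q1+y*q2+z*q3 = 0) (hs : x*s1+y*s2+z*s3 = 0) (ht : x*t1+y*t2+z*t3 = 0) :
  (p3 + s1 + t2)^2 + (q3 + t1 - s2)^2 + (p1 - q2 - s3)^2 + (q1 + p2 - t3)^2 ≤
   2*(p1^2+p2^2+p3^2+q1^2+q2^2+q3^2+s1^2+s2^2+s3^2+t1^2+t2^2+t3^2) := by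
  obtain ⟨A, hA⟩ : ∃ A, A = p3 + s1 + t2 := ⟨_, rfl⟩
  obtain ⟨B, hB⟩ : ∃ A, A = q3 + t1 - s2 := ⟨_, rfl⟩
  obtain ⟨C, hC⟩ : ∃ A, A = p1 - q2 - s3 := ⟨_, rfl⟩
  obtain ⟨D, hD⟩ : ∃ A, A = q1 + p2 - t3 := ⟨_, rfl⟩
  obtain ⟨n, hn⟩ : ∃ n, n = x^2+y^2+z^2 := ⟨_, rfl⟩
  obtain ⟨U, hU⟩ : ∃ E, E = z*A + x*C + y*D := ⟨_, rfl⟩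
  obtain ⟨V, hV⟩ : ∃ E, E = z*B + x*D - y*C := ⟨_, rfl⟩
  obtain ⟨W, hW⟩ : ∃ E, E = x*A - y*B - z*C := ⟨_, rfl⟩
  obtain ⟨X, hX⟩ : ∃ E, E = x*B + y*A - z*D := ⟨_, rfl⟩
  -- With `S = σ·ψ`, the deficit is twice the squared norm of the twistor part
  -- `ψₖ - (σₖ - xₖ (σ·x) / |x|²) S / 2`. Here `S = (A + iB, C + iD)` and
  -- `(σ·x) S = (U + iV, W + iX)`.
  have key : n^2 * (2*(p1^2+p2^2+p3^2+q1^2+q2^2+q3^2+s1^2+s2^2+s3^2+t1^2+t2^2+t3^2) -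
      (A^2+B^2+C^2+D^2)) = 2 * (
      (n*p1 - (n*C-x*U)/2)^2 + (n*q1 - (n*D-x*V)/2)^2 + (n*s1 - (n*A-x*W)/2)^2 + (n*t1 - (n*B-x*X)/2)^2
      + (n*p2 - (n*D-y*U)/2)^2 + (n*q2 - (n*(-C)-y*V)/2)^2 + (n*s2 - (n*(-B)-y*W)/2)^2 + (n*t2 - (n*A-y*X)/2)^2
      + (n*p3 - (n*A-z*U)/2)^2 + (n*q3 - (n*B-z*V)/2)^2 + (n*s3 - (n*(-C)-z*W)/2)^2 + (n*t3 - (n*(-D)-z*X)/2)^2) := by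
    have e : U^2+V^2+W^2+X^2 = n*(A^2+B^2+C^2+D^2) := by subst hU hV hW hX hn; ring
    have e2 : A*(p3 + s1 + t2)+B*(q3 + t1 - s2)+C*(p1 - q2 - s3)+D*(q1 + p2 - t3)=A^2+B^2+C^2+D^2 := by
      rw [← hA, ← hB, ← hC, ← hD]; ring
    have e3 : U*(z*A + x*C + y*D)+V*(z*B + x*D - y*C)+W*(x*A - y*B - z*C)+X*(x*B + y*A - z*D) = U^2+V^2+W^2+X^2 := by
      rw [← hU, ← hV, ← hW, ← hX]; ring
    have e4 : (x^2+y^2+z^2)*(U^2+V^2+W^2+X^2) = n*(U^2+V^2+W^2+X^2) := by rw [hn]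
    linear_combination (-2*n*U)*hp + (-2*n*V)*hq + (-2*n*W)*hs+(-2*n*X)*ht + 2*n^2*e2 + n*e3 - e4/2 +n/2*e
  have : 0 ≤ 2*(p1^2+p2^2+p3^2+q1^2+q2^2+q3^2+s1^2+s2^2+s3^2+t1^2+t2^2+t3^2) -
      (A^2+B^2+C^2+D^2) := by
    refine nonneg_of_mul_nonneg_right (?_ : 0 ≤ n^2 * _) (by rw [hn]; positivity)
    rw [key]; positivity
  rw [← hA, ← hB, ← hC, ← hD]; linarith

/-- The pointwise inequality behind the theorem, multiplied by `r`: the difference of the two sides is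
`|(x·∇)φ + φ|² + (2 |Lφ|² - |(σ·L)φ|²)`. Here `a, …, d` are the real components of `φ` and
`a1, …, d3` their partial derivatives. -/
theorem pointwise_ineq (x y z r a b c d a1 a2 a3 b1 b2 b3 c1 c2 c3 d1 d2 d3 : ℝ)
    (hr : r ^ 2 = x ^ 2 + y ^ 2 + z ^ 2) (h0 : 0 < r) :
    (a^2+b^2+c^2+d^2)
     - (2 * (x * (a*a1+b*b1+c*c1+d*d1) + y * (a*a2+b*b2+c*c2+d*d2) + z * (a*a3+b*b3+c*c3+d*d3))
        + 2 * (a^2+b^2+c^2+d^2))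
     + ((r^2+x*x) * (-2*((a2*d3-a3*d2)-(b2*c3-b3*c2))) + x*y*(-2*((a3*d1-a1*d3)-(b3*c1-b1*c3)))
        + x*z*(-2*((a1*d2-a2*d1)-(b1*c2-b2*c1)))
        + y*x*(2*((a2*c3-a3*c2)+(b2*d3-b3*d2))) + (r^2+y*y)*(2*((a3*c1-a1*c3)+(b3*d1-b1*d3)))
        + y*z*(2*((a1*c2-a2*c1)+(b1*d2-b2*d1)))
        + z*x*(-2*((a2*b3-a3*b2)-(c2*d3-c3*d2))) + z*y*(-2*((a3*b1-a1*b3)-(c3*d1-c1*d3)))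
        + (r^2+z*z)*(-2*((a1*b2-a2*b1)-(c1*d2-c2*d1))))
    ≤ r^2 * ((a3 + c1 + d2)^2 + (b3 + d1 - c2)^2 + (a1 - b2 - c3)^2 + (b1 + a2 - d3)^2) := by
  have tw := twist x y z (y*a3-z*a2) (z*a1-x*a3) (x*a2-y*a1) (y*b3-z*b2) (z*b1-x*b3) (x*b2-y*b1)
    (y*c3-z*c2) (z*c1-x*c3) (x*c2-y*c1) (y*d3-z*d2) (z*d1-x*d3) (x*d2-y*d1)
    (by rw [← hr]; positivity) (by ring) (by ring) (by ring) (by ring)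
  have sq : 0 ≤ (x*a1+y*a2+z*a3+a)^2 + (x*b1+y*b2+z*b3+b)^2 + (x*c1+y*c2+z*c3+c)^2
      + (x*d1+y*d2+z*d3+d)^2 := by positivity
  rw [← sub_nonneg] at tw ⊢
  refine (add_nonneg sq tw).trans_eq ?_
  rw [hr]; ring

/-! ### The inequality -/

theorem dd_comp {φ : E3 → ℂ × ℂ} (hφ : ContDiff ℝ (⊤ : ℕ∞) φ) (L : ℂ × ℂ →L[ℝ] ℝ) (i : Fin 3)
    (x : E3) : dd i (fun y => L (φ y)) x = L (pd i φ x) := by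
  have h : HasFDerivAt (fun y => L (φ y)) (L.comp (fderiv ℝ φ x)) x :=
    L.hasFDerivAt.comp x (hφ.differentiable (by simp) x).hasFDerivAt
  unfold dd pd
  rw [h.fderiv]
  rfl

theorem dd_sumsq {a b c d : E3 → ℝ} (ha : ContDiff ℝ (⊤ : ℕ∞) a) (hb : ContDiff ℝ (⊤ : ℕ∞) b)
    (hc : ContDiff ℝ (⊤ : ℕ∞) c) (hd : ContDiff ℝ (⊤ : ℕ∞) d) (i : Fin 3) (x : E3) :
    dd i (fun y => a y * a y + b y * b y + c y * c y + d y * d y) x =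
      2 * (a x * dd i a x + b x * dd i b x + c x * dd i c x + d x * dd i d x) := by
  rw [dd_add (((ha.mul ha).add (hb.mul hb)).add (hc.mul hc)) (hd.mul hd),
    dd_add ((ha.mul ha).add (hb.mul hb)) (hc.mul hc), dd_add (ha.mul ha) (hb.mul hb),
    dd_mul ha ha, dd_mul hb hb, dd_mul hc hc, dd_mul hd hd]
  ring

theorem hardy_dirac_R2 (φ : E3 → ℂ × ℂ)
    (hφ : ContDiff ℝ (⊤ : ℕ∞) φ) (hsupp : HasCompactSupport φ) :
    ∫ x : E3, ‖x‖ * nsq (sigmaGrad φ x) ≥ ∫ x : E3, nsq (φ x) / ‖x‖ := by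
  by_cases hQ : Integrable (fun x : E3 => nsq (φ x) / ‖x‖)
  swap
  -- A non-integrable right-hand side has integral `0` by convention.
  · rw [integral_undef hQ]
    refine integral_nonneg fun x => ?_
    unfold nsq
    positivity
  set A : ℂ × ℂ →L[ℝ] ℝ := Complex.reCLM.comp (ContinuousLinearMap.fst ℝ ℂ ℂ) with hA
  set B : ℂ × ℂ →L[ℝ] ℝ := Complex.imCLM.comp (ContinuousLinearMap.fst ℝ ℂ ℂ) with hB
  set C : ℂ × ℂ →L[ℝ] ℝ := Complex.reCLM.comp (ContinuousLinearMap.snd ℝ ℂ ℂ) with hC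
  set D : ℂ × ℂ →L[ℝ] ℝ := Complex.imCLM.comp (ContinuousLinearMap.snd ℝ ℂ ℂ) with hD
  have smooth : ∀ L : ℂ × ℂ →L[ℝ] ℝ, ContDiff ℝ (⊤ : ℕ∞) (fun y => L (φ y)) := fun L =>
    L.contDiff.comp hφ
  have supp : ∀ L : ℂ × ℂ →L[ℝ] ℝ, HasCompactSupport (fun y => L (φ y)) := fun L =>
    hsupp.comp_left (map_zero L)
  have hnsq : ∀ p, nsq p = A p * A p + B p * B p + C p * C p + D p * D p := fun p => by
    simp [nsq, hA, hB, hC, hD, ← Complex.normSq_eq_norm_sq, Complex.normSq_apply]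
    ring
  set u : E3 → ℝ := fun y => A (φ y) * A (φ y) + B (φ y) * B (φ y) + C (φ y) * C (φ y) +
    D (φ y) * D (φ y) with hu
  have smooth_u : ContDiff ℝ (⊤ : ℕ∞) u :=
    ((((smooth A).mul (smooth A)).add ((smooth B).mul (smooth B))).add
      ((smooth C).mul (smooth C))).add ((smooth D).mul (smooth D))
  have supp_u : HasCompactSupport u :=
    (((supp A).mul_left.add (supp B).mul_left).add (supp C).mul_left).add (supp D).mul_left
  have u_nonneg : ∀ x, 0 ≤ u x := fun x => by
    simp only [hu]
    nlinarith [mul_self_nonneg (A (φ x)), mul_self_nonneg (B (φ x)), mul_self_nonneg (C (φ x)),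
      mul_self_nonneg (D (φ x))]
  have hQu : Integrable (fun x : E3 => u x / ‖x‖) := by
    simpa only [hnsq] using hQ
  have hsg : ∀ x, nsq (sigmaGrad φ x) =
      (A (pd 2 φ x) + C (pd 0 φ x) + D (pd 1 φ x)) ^ 2 +
      (B (pd 2 φ x) + D (pd 0 φ x) - C (pd 1 φ x)) ^ 2 +
      (A (pd 0 φ x) - B (pd 1 φ x) - C (pd 2 φ x)) ^ 2 +
      (B (pd 0 φ x) + A (pd 1 φ x) - D (pd 2 φ x)) ^ 2 := fun x => by
    simp [nsq, sigmaGrad, hA, hB, hC, hD, ← Complex.normSq_eq_norm_sq, Complex.normSq_apply]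
    ring
  have cpd : ∀ i, Continuous (pd i φ) := fun i =>
    ((hφ.fderiv_right (m := (⊤ : ℕ∞)) (by simp)).clm_apply contDiff_const).continuous
  have hP : Integrable (fun x : E3 => ‖x‖ * nsq (sigmaGrad φ x)) := by
    refine Continuous.integrable_of_hasCompactSupport ?_ ?_
    · simp only [hsg]
      have := cpd
      fun_prop
    · refine HasCompactSupport.intro hsupp.isCompact fun x hx => ?_
      have : fderiv ℝ φ x = 0 := by
        by_contra h
        exact hx (support_fderiv_subset ℝ h)
      simp [nsq, sigmaGrad, pd, this]
  have J := fun k (L M : ℂ × ℂ →L[ℝ] ℝ) => integrable_jac k (smooth L) (smooth M) (supp L)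
  have J0 := fun k (L M : ℂ × ℂ →L[ℝ] ℝ) => integral_jac k (smooth L) (smooth M) (supp L)
  set j : Fin 3 → (ℂ × ℂ →L[ℝ] ℝ) → (ℂ × ℂ →L[ℝ] ℝ) → E3 → ℝ :=
    fun k L M => jac k (fun y => L (φ y)) (fun y => M (φ y)) with hj
  have K1 : Integrable (fun x => j 0 A D x - j 0 B C x) := (J 0 A D).sub (J 0 B C)
  have K2 : Integrable (fun x => j 1 A C x + j 1 B D x) := (J 1 A C).add (J 1 B D)
  have K3 : Integrable (fun x => j 2 A B x - j 2 C D x) := (J 2 A B).sub (J 2 C D)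
  have Z1 : ∫ x, (j 0 A D x - j 0 B C x) = 0 := by
    rw [integral_sub (J 0 A D) (J 0 B C), J0, J0, sub_zero]
  have Z2 : ∫ x, (j 1 A C x + j 1 B D x) = 0 := by
    rw [integral_add (J 1 A C) (J 1 B D), J0, J0, add_zero]
  have Z3 : ∫ x, (j 2 A B x - j 2 C D x) = 0 := by
    rw [integral_sub (J 2 A B) (J 2 C D), J0, J0, sub_zero]
  have hZ0 : ∫ x, (-2 * (j 0 A D x - j 0 B C x) + 2 * (j 1 A C x + j 1 B D x) +
      -2 * (j 2 A B x - j 2 C D x)) = 0 := by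
    rw [integral_add₃ (K1.const_mul _) (K2.const_mul _) (K3.const_mul _), integral_const_mul,
      integral_const_mul, integral_const_mul, Z1, Z2, Z3]
    ring
  have hZ : Integrable (fun x => -2 * (j 0 A D x - j 0 B C x) + 2 * (j 1 A C x + j 1 B D x) +
      -2 * (j 2 A B x - j 2 C D x)) :=
    ((K1.const_mul (-2)).add (K2.const_mul 2)).add (K3.const_mul (-2))
  have hS := integrable_eul_div smooth_u supp_u hQu
  have hS0 := integral_eul_div_le smooth_u supp_u u_nonneg hQu
  simp only [hnsq (φ _)]
  have hQS : Integrable (fun x : E3 => u x / ‖x‖ - eul u x / ‖x‖) := hQu.sub hS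
  have main : ∫ x : E3, (u x / ‖x‖ - eul u x / ‖x‖ +
      (-2 * (j 0 A D x - j 0 B C x) + 2 * (j 1 A C x + j 1 B D x) +
      -2 * (j 2 A B x - j 2 C D x))) ≤ ∫ x : E3, ‖x‖ * nsq (sigmaGrad φ x) := by
    refine integral_mono_ae (hQS.add hZ) hP ?_
    filter_upwards [ae_ne_zero] with x hx
    have hr : 0 < ‖x‖ := norm_pos_iff.2 hx
    have key := pointwise_ineq (x 0) (x 1) (x 2) ‖x‖ (A (φ x)) (B (φ x)) (C (φ x)) (D (φ x))
      (A (pd 0 φ x)) (A (pd 1 φ x)) (A (pd 2 φ x)) (B (pd 0 φ x)) (B (pd 1 φ x)) (B (pd 2 φ x))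
      (C (pd 0 φ x)) (C (pd 1 φ x)) (C (pd 2 φ x)) (D (pd 0 φ x)) (D (pd 1 φ x)) (D (pd 2 φ x))
      (norm_sq_coord x) hr
    have hdu : ∀ i, dd i u x = 2 * (A (φ x) * A (pd i φ x) + B (φ x) * B (pd i φ x) +
        C (φ x) * C (pd i φ x) + D (φ x) * D (pd i φ x)) := fun i => by
      rw [hu, dd_sumsq (smooth A) (smooth B) (smooth C) (smooth D)]
      simp only [dd_comp hφ]
    rw [← mul_le_mul_iff_right₀ hr]
    refine le_trans (le_of_eq ?_) (key.trans (le_of_eq ?_))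
    · have hux : u x = A (φ x) * A (φ x) + B (φ x) * B (φ x) + C (φ x) * C (φ x) +
          D (φ x) * D (φ x) := rfl
      simp only [hj, jac, minor, hgrad, dd_comp hφ, eul, hdu]
      rw [hux]
      clear_value u
      simp only [Fin.isValue, Fin.reduceEq, if_true, if_false]
      generalize ‖x‖ = r at *
      field_simp
      ring
    · rw [hsg]; ring
  rw [integral_add hQS hZ, hZ0, integral_sub hQu hS] at main
  linarith
end
end

section
/- Let δ > 0 and let m : [0,δ) → ℝ be continuous and differentiable on (0,δ). Suppose that W^{+,m}(s) := (2 m(s) + s m'(s) − s m(s)² + s)/(1 + m(s)²) satisfies W^{+,m}(s) ≥ 1 for all s ∈ (0,δ). Then m(0) = 1, m(s) ≥ 1 for all s in some interval (0,ε) with ε > 0, and limsup_{s→0⁺} |(m(s) − 1) · log s| < +∞. -/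
/-!
With `u = m - 1`, the hypothesis on the weight is the differential inequality
`s u' ≥ u² + s u (u + 2)` on `(0, δ)` (`weight_ineq`).

* If `u 0 ≠ 0`, the right-hand side stays above some `c > 0` near `0` by continuity, so
  `m - c log` is monotone there and `m` tends to `-∞` at `0⁺`, contradicting continuity
  (`value_at_zero`).
* The inequality implies `u' ≥ 2 u`, so `exp (-2 s) u` is monotone and vanishes at `0`; hence
  `u ≥ 0` on all of `[0, δ)` (`one_le_of_weight`).
* Once `u ≥ 0`, the inequality gives `s u' ≥ u²`, so `u` is monotone, and wherever `u > 0` the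
  function `-1/u - log` is monotone. Integrating from `s` to a fixed `s₀` yields
  `u s (log s₀ - log s) ≤ 1` (`mul_log_le`), which is the logarithmic bound.
-/

open MeasureTheory Real Filter Set

noncomputable section

/-- The lower bound on the weight, cleared of its denominator and solved for the derivative term. -/
lemma weight_ineq {s x d : ℝ}
    (h : 1 ≤ (2 * x + s * d - s * x ^ 2 + s) / (1 + x ^ 2)) :
    (x - 1) ^ 2 + s * (x ^ 2 - 1) ≤ s * d := by
  rw [le_div_iff₀ (by positivity)] at h
  nlinarith

lemma value_at_zero {δ : ℝ} (hδ : 0 < δ) {m : ℝ → ℝ}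
    (hc : ContinuousOn m (Set.Ico 0 δ))
    (hd : ∀ s ∈ Set.Ioo 0 δ, DifferentiableAt ℝ m s)
    (h : ∀ s ∈ Set.Ioo 0 δ, (m s - 1) ^ 2 + s * ((m s) ^ 2 - 1) ≤ s * deriv m s) :
    m 0 = 1 := by
  by_contra hne
  have hm : Tendsto m (nhdsWithin 0 (Set.Ioi 0)) (nhds (m 0)) := by
    have h0 := (hc 0 ⟨le_rfl, hδ⟩).mono Set.Ioo_subset_Ico_self
    rwa [ContinuousWithinAt, nhdsWithin_Ioo_eq_nhdsGT hδ] at h0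
  have hs : Tendsto (fun s : ℝ => s) (nhdsWithin 0 (Set.Ioi 0)) (nhds 0) :=
    tendsto_id.mono_left nhdsWithin_le_nhds
  have hpos : 0 < (m 0 - 1) ^ 2 := by
    have : m 0 - 1 ≠ 0 := sub_ne_zero.mpr hne
    positivity
  obtain ⟨c, hc0, hc1⟩ := exists_between hpos
  have hev : ∀ᶠ s in nhdsWithin (0 : ℝ) (Set.Ioi 0),
      c < (m s - 1) ^ 2 + s * ((m s) ^ 2 - 1) := by
    have ht := ((hm.sub_const 1).pow 2).add (hs.mul ((hm.pow 2).sub_const 1))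
    exact ht.eventually (lt_mem_nhds (by simpa using hc1))
  obtain ⟨η, hη, hη'⟩ := mem_nhdsGT_iff_exists_Ioo_subset.1
    (hev.and (Ioo_mem_nhdsGT hδ))
  have hη0 : (0 : ℝ) < η := hη
  have hderiv : ∀ s ∈ Set.Ioo 0 η,
      HasDerivAt (fun s => m s - c * Real.log s) (deriv m s - c * s⁻¹) s := fun s hs =>
    (hd s (hη' hs).2).hasDerivAt.sub ((Real.hasDerivAt_log hs.1.ne').const_mul c)
  have hmono : MonotoneOn (fun s => m s - c * Real.log s) (Set.Ioo 0 η) := by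
    refine monotoneOn_of_deriv_nonneg (convex_Ioo 0 η)
      (fun s hs => (hderiv s hs).continuousAt.continuousWithinAt) ?_ ?_ <;>
      rw [interior_Ioo] <;> intro s hs
    · exact (hderiv s hs).differentiableAt.differentiableWithinAt
    · rw [(hderiv s hs).deriv, ← div_eq_mul_inv, sub_nonneg, div_le_iff₀ hs.1]
      have h1 : c < _ := (hη' hs).1
      have h2 := h s (hη' hs).2
      linarith
  have hbot : Tendsto m (nhdsWithin 0 (Set.Ioi 0)) atBot := by
    have hlog : Tendsto (fun s => m (η / 2) - c * Real.log (η / 2) + c * Real.log s)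
        (nhdsWithin 0 (Set.Ioi 0)) atBot :=
      tendsto_atBot_add_const_left _ _ (Real.tendsto_log_nhdsGT_zero.const_mul_atBot hc0)
    refine tendsto_atBot_mono' _ ?_ hlog
    filter_upwards [Ioo_mem_nhdsGT (half_pos hη0)] with s hs
    have := hmono ⟨hs.1, hs.2.trans (half_lt_self hη0)⟩
      ⟨half_pos hη0, half_lt_self hη0⟩ hs.2.le
    simp only at this
    linarith
  exact not_tendsto_nhds_of_tendsto_atBot hbot _ hm

lemma one_le_of_weight {δ : ℝ} {m : ℝ → ℝ}
    (hc : ContinuousOn m (Set.Ico 0 δ))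
    (hd : ∀ s ∈ Set.Ioo 0 δ, DifferentiableAt ℝ m s)
    (h : ∀ s ∈ Set.Ioo 0 δ, (m s - 1) ^ 2 + s * ((m s) ^ 2 - 1) ≤ s * deriv m s)
    (h0 : m 0 = 1) : ∀ s ∈ Set.Ioo 0 δ, 1 ≤ m s := by
  have hderiv : ∀ s ∈ Set.Ioo 0 δ,
      HasDerivAt (fun s => Real.exp (-2 * s) * (m s - 1))
        (Real.exp (-2 * s) * (-2 * 1) * (m s - 1) + Real.exp (-2 * s) * deriv m s) s :=
    fun s hs => (((hasDerivAt_id s).const_mul (-2)).exp).mul ((hd s hs).hasDerivAt.sub_const 1)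
  have hmono : MonotoneOn (fun s => Real.exp (-2 * s) * (m s - 1)) (Set.Ico 0 δ) := by
    refine monotoneOn_of_deriv_nonneg (convex_Ico 0 δ)
      ((by fun_prop : Continuous fun s : ℝ => Real.exp (-2 * s)).continuousOn.mul
        (hc.sub continuousOn_const)) ?_ ?_ <;>
      rw [interior_Ico] <;> intro s hs
    · exact (hderiv s hs).differentiableAt.differentiableWithinAt
    · rw [(hderiv s hs).deriv]
      have h1 := h s hs
      have h2 : 0 ≤ deriv m s - 2 * (m s - 1) := by
        refine nonneg_of_mul_nonneg_right (a := s) ?_ hs.1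
        nlinarith [sq_nonneg (m s - 1), mul_nonneg hs.1.le (sq_nonneg (m s - 1))]
      have h3 := mul_nonneg (Real.exp_pos (-2 * s)).le h2
      linarith
  intro s hs
  have h1 := hmono ⟨le_rfl, hs.1.trans hs.2⟩ ⟨hs.1.le, hs.2⟩ hs.1.le
  simp only [h0, sub_self, mul_zero] at h1
  linarith [nonneg_of_mul_nonneg_right h1 (Real.exp_pos (-2 * s))]

/-- Riccati comparison: a nonnegative solution of `s u' ≥ u²` satisfies
`u s ≤ 1 / log (s₀ / s)`, and it is nondecreasing. -/
lemma mul_log_le {δ : ℝ} {m : ℝ → ℝ}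
    (hd : ∀ s ∈ Set.Ioo 0 δ, DifferentiableAt ℝ m s)
    (h : ∀ s ∈ Set.Ioo 0 δ, (m s - 1) ^ 2 ≤ s * deriv m s)
    (h1 : ∀ s ∈ Set.Ioo 0 δ, 1 ≤ m s) {s s₀ : ℝ} (hs : 0 < s) (hss : s ≤ s₀) (hs₀ : s₀ < δ) :
    m s ≤ m s₀ ∧ (m s - 1) * (Real.log s₀ - Real.log s) ≤ 1 := by
  have hmono : MonotoneOn m (Set.Ioo 0 δ) := by
    refine monotoneOn_of_deriv_nonneg (convex_Ioo 0 δ)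
      (fun t ht => (hd t ht).continuousAt.continuousWithinAt) ?_ ?_ <;>
      rw [interior_Ioo] <;> intro t ht
    · exact (hd t ht).differentiableWithinAt
    · exact nonneg_of_mul_nonneg_right ((sq_nonneg _).trans (h t ht)) ht.1
  have hsm : s ∈ Set.Ioo 0 δ := ⟨hs, hss.trans_lt hs₀⟩
  have hs₀m : s₀ ∈ Set.Ioo 0 δ := ⟨hs.trans_le hss, hs₀⟩
  refine ⟨hmono hsm hs₀m hss, ?_⟩
  rcases (h1 s hsm).eq_or_lt with heq | hlt
  · simp [← heq]
  have hmem : ∀ t ∈ Set.Icc s s₀, t ∈ Set.Ioo 0 δ := fun t ht =>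
    ⟨hs.trans_le ht.1, ht.2.trans_lt hs₀⟩
  have hpos : ∀ t ∈ Set.Icc s s₀, 0 < m t - 1 := fun t ht => by
    linarith [hmono hsm (hmem t ht) ht.1]
  have hderiv : ∀ t ∈ Set.Icc s s₀,
      HasDerivAt (fun t => -(m t - 1)⁻¹ - Real.log t)
        (-(-deriv m t / (m t - 1) ^ 2) - t⁻¹) t := fun t ht =>
    (((hd t (hmem t ht)).hasDerivAt.sub_const 1).fun_inv (hpos t ht).ne').fun_neg.fun_sub
      (Real.hasDerivAt_log (hmem t ht).1.ne')
  have hmono' : MonotoneOn (fun t => -(m t - 1)⁻¹ - Real.log t) (Set.Icc s s₀) := by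
    refine monotoneOn_of_deriv_nonneg (convex_Icc s s₀)
      (fun t ht => (hderiv t ht).continuousAt.continuousWithinAt) ?_ ?_ <;>
      intro t ht <;> have ht := interior_subset ht
    · exact (hderiv t ht).differentiableAt.differentiableWithinAt
    · have ht0 := (hmem t ht).1
      have hp := hpos t ht
      rw [(hderiv t ht).deriv, neg_div, neg_neg, sub_nonneg, le_div_iff₀ (by positivity),
        inv_mul_le_iff₀ ht0]
      exact h t (hmem t ht)
  have h2 := hmono' ⟨le_rfl, hss⟩ ⟨hss, le_rfl⟩ hss
  simp only at h2
  have hp := hpos s ⟨le_rfl, hss⟩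
  have hp₀ : 0 < (m s₀ - 1)⁻¹ := inv_pos.2 (hpos s₀ ⟨hss, le_rfl⟩)
  have h3 : Real.log s₀ - Real.log s ≤ (m s - 1)⁻¹ := by linarith
  calc (m s - 1) * (Real.log s₀ - Real.log s) ≤ (m s - 1) * (m s - 1)⁻¹ := by gcongr
    _ = 1 := mul_inv_cancel₀ hp.ne'

theorem behavior_of_m_near_zero (δ : ℝ) (hδ : 0 < δ) (m : ℝ → ℝ)
    (hc : ContinuousOn m (Set.Ico 0 δ))
    (hd : ∀ s ∈ Set.Ioo 0 δ, DifferentiableAt ℝ m s)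
    (hW : ∀ s ∈ Set.Ioo 0 δ,
      1 ≤ (2 * m s + s * deriv m s - s * (m s) ^ 2 + s) / (1 + (m s) ^ 2)) :
    m 0 = 1 ∧ (∃ ε > (0 : ℝ), ∀ s ∈ Set.Ioo 0 ε, 1 ≤ m s) ∧
      Filter.IsBoundedUnder (· ≤ ·) (nhdsWithin 0 (Set.Ioi 0))
        (fun s => |(m s - 1) * Real.log s|) := by
  have h := fun s hs => weight_ineq (hW s hs)
  have h0 := value_at_zero hδ hc hd h
  have h1 := one_le_of_weight hc hd h h0
  refine ⟨h0, ⟨δ, hδ, h1⟩, ?_⟩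
  have hR : ∀ s ∈ Set.Ioo 0 δ, (m s - 1) ^ 2 ≤ s * deriv m s := fun s hs => by
    have h2 := h s hs
    have h3 : 0 ≤ (m s) ^ 2 - 1 := by nlinarith [h1 s hs]
    linarith [mul_nonneg hs.1.le h3]
  -- `s₀ < 1` fixes the sign of `log s` on `(0, s₀)`.
  obtain ⟨s₀, hs₀, hs₀'⟩ := exists_between (lt_min hδ one_pos)
  obtain ⟨hs₀δ, hs₀1⟩ := lt_min_iff.1 hs₀'
  refine ⟨1 + (m s₀ - 1) * -Real.log s₀, ?_⟩
  rw [Filter.eventually_map]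
  filter_upwards [Ioo_mem_nhdsGT hs₀] with s hs
  obtain ⟨h2, h3⟩ := mul_log_le hd hR h1 hs.1 hs.2.le hs₀δ
  have hu : 0 ≤ m s - 1 := sub_nonneg.2 (h1 s ⟨hs.1, hs.2.trans hs₀δ⟩)
  have hl : Real.log s ≤ 0 := Real.log_nonpos hs.1.le (hs.2.trans hs₀1).le
  have hl₀ : 0 ≤ -Real.log s₀ := neg_nonneg.2 (Real.log_nonpos hs₀.le hs₀1.le)
  rw [abs_of_nonpos (mul_nonpos_of_nonneg_of_nonpos hu hl)]
  have h4 : (m s - 1) * -Real.log s₀ ≤ (m s₀ - 1) * -Real.log s₀ := by gcongr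
  linarith
end
end

section
/- Fix a > 1 and let k ≥ 1 be an integer. Define π_j(s) = X₁(s)·X₂(s)⋯X_j(s) and σ_k(s) = Σ_{j=1}^k π_j(s). Then σ_k is differentiable on (0, e^{a−1}) and for every s ∈ (0, e^{a−1}), 2 s σ_k'(s) − σ_k(s)² = Σ_{j=1}^k π_j(s)². -/
/-!
Each iterated logarithm satisfies `s X_j' = π_j X_j`, because
`X_{j+1}' = X_{j+1}² X_j' / X_j`. Logarithmic differentiation of the product then gives
`s π_j' = π_j σ_j`, so that `2 s σ_k' = 2 ∑_{j ≤ k} π_j σ_j`. Since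
`σ_{k+1}² - σ_k² = 2 π_{k+1} σ_{k+1} - π_{k+1}²`, the identity follows by telescoping.
-/

open MeasureTheory Real Filter Set

noncomputable section

/-- The interval `(0, e^{a-1})` is stable under `X₁`: there `a - log s > 1`, so `X₁(s) ∈ (0, 1)`. -/
lemma Xk_mem {a s : ℝ} (ha : 1 < a) (hs : s ∈ Set.Ioo 0 (Real.exp (a - 1))) (j : ℕ) :
    Xk a j s ∈ Set.Ioo 0 (Real.exp (a - 1)) := by
  induction j with
  | zero => simpa [Xk] using hs
  | succ j ih =>
    have hlog : Real.log (Xk a j s) < a - 1 := (Real.log_lt_iff_lt_exp ih.1).2 ih.2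
    have hexp : 1 < Real.exp (a - 1) := Real.one_lt_exp_iff.2 (by linarith)
    refine ⟨inv_pos.2 (by linarith), lt_trans ?_ hexp⟩
    exact inv_lt_one_of_one_lt₀ (by linarith)

lemma piX_succ (a : ℝ) (j : ℕ) (s : ℝ) : piX a (j + 1) s = piX a j s * Xk a (j + 1) s := by
  simp [piX, Finset.prod_Icc_succ_top]

lemma hasDerivAt_Xk {a s : ℝ} (ha : 1 < a) (hs : s ∈ Set.Ioo 0 (Real.exp (a - 1))) (j : ℕ) :
    HasDerivAt (Xk a j) (Xk a j s * piX a j s / s) s := by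
  have hs0 : s ≠ 0 := hs.1.ne'
  induction j with
  | zero => exact (hasDerivAt_id' s).congr_deriv (by simp [Xk, piX, hs0])
  | succ j ih =>
    have hX := Xk_mem ha hs j
    have hlog : Real.log (Xk a j s) < a - 1 := (Real.log_lt_iff_lt_exp hX.1).2 hX.2
    have hne : a - Real.log (Xk a j s) ≠ 0 := by linarith
    have hX0 : Xk a j s ≠ 0 := hX.1.ne'
    refine ((ih.log hX0).const_sub a).fun_inv hne |>.congr_deriv ?_
    rw [piX_succ]
    simp only [Xk]
    field_simp

lemma hasDerivAt_piX {a s : ℝ} (ha : 1 < a) (hs : s ∈ Set.Ioo 0 (Real.exp (a - 1))) (j : ℕ) :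
    HasDerivAt (piX a j) (piX a j s * (∑ i ∈ Finset.Icc 1 j, piX a i s) / s) s := by
  induction j with
  | zero =>
    have h : piX a 0 = fun _ => 1 := by ext; simp [piX]
    simpa [h] using hasDerivAt_const s (1 : ℝ)
  | succ j ih =>
    have h : piX a (j + 1) = fun t => piX a j t * Xk a (j + 1) t := by
      ext t; exact piX_succ a j t
    rw [h]
    refine ih.fun_mul (hasDerivAt_Xk ha hs (j + 1)) |>.congr_deriv ?_
    rw [Finset.sum_Icc_succ_top (by omega), piX_succ]
    ring

theorem sigma_k_identity (a : ℝ) (ha : 1 < a) (k : ℕ) (hk : 1 ≤ k) :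
    ∀ s ∈ Set.Ioo 0 (Real.exp (a - 1)),
      DifferentiableAt ℝ (fun t => ∑ j ∈ Finset.Icc 1 k, piX a j t) s ∧
      2 * s * deriv (fun t => ∑ j ∈ Finset.Icc 1 k, piX a j t) s -
          (∑ j ∈ Finset.Icc 1 k, piX a j s) ^ 2 =
        ∑ j ∈ Finset.Icc 1 k, (piX a j s) ^ 2 := by
  intro s hs
  have hs0 : s ≠ 0 := hs.1.ne'
  have hd := HasDerivAt.fun_sum (u := Finset.Icc 1 k) fun j _ => hasDerivAt_piX ha hs j
  refine ⟨hd.differentiableAt, ?_⟩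
  rw [hd.deriv]
  clear hd hk
  induction k with
  | zero => simp
  | succ k ih =>
    simp only [Finset.sum_Icc_succ_top (show 1 ≤ k + 1 by omega)]
    rw [← ih]
    field_simp
    ring
end
end

section
/- Let A > 0 and let n : (A, +∞) → ℝ be differentiable. Then liminf_{t→+∞} ( t n'(t) − n(t)² ) ≤ 0. -/
/-!
The real `liminf` is the supremum of the eventual lower bounds `a` of `t n' - n ^ 2`, so it suffices
that no such `a` is positive (an empty family has supremum `0`). If `a = c ^ 2` with `c > 0`, then
`n' / (c ^ 2 + n ^ 2) ≥ 1 / t` eventually, that is, `arctan (n / c) - c * log t` is eventually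
nondecreasing. Since `arctan` is bounded and `log t` tends to infinity, this is impossible.
-/

open MeasureTheory Real Filter Set

noncomputable section

/-- A Riccati inequality `t n' ≥ c ^ 2 + n ^ 2` with `c > 0` has no solution on a half-line. -/
theorem not_eventually_riccati (A c : ℝ) (hc : 0 < c) (n : ℝ → ℝ)
    (hd : ∀ t ∈ Set.Ioi A, DifferentiableAt ℝ n t) :
    ¬ ∀ᶠ t in Filter.atTop, c ^ 2 ≤ t * deriv n t - (n t) ^ 2 := by
  intro h
  obtain ⟨T, hT⟩ := Filter.eventually_atTop.1
    ((h.and (Filter.eventually_gt_atTop A)).and (Filter.eventually_gt_atTop 0))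
  have hder : ∀ t ∈ Set.Ici T,
      HasDerivAt (fun s => Real.arctan (n s / c) - c * Real.log s)
        (1 / (1 + (n t / c) ^ 2) * (deriv n t / c) - c * t⁻¹) t := by
    intro t ht
    obtain ⟨⟨-, hA⟩, h0⟩ := hT t ht
    exact ((hd t hA).hasDerivAt.div_const c).arctan.sub
      ((Real.hasDerivAt_log h0.ne').const_mul c)
  have hmono : MonotoneOn (fun s => Real.arctan (n s / c) - c * Real.log s) (Set.Ici T) := by
    refine monotoneOn_of_deriv_nonneg (convex_Ici T)
      (fun t ht => (hder t ht).continuousAt.continuousWithinAt)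
      (fun t ht => (hder t (interior_subset ht)).differentiableAt.differentiableWithinAt) ?_
    intro t ht
    have ht' := interior_subset ht
    obtain ⟨⟨hle, -⟩, h0⟩ := hT t ht'
    rw [(hder t ht').deriv]
    have key : 1 / (1 + (n t / c) ^ 2) * (deriv n t / c) - c * t⁻¹
        = c * (t * deriv n t - (n t) ^ 2 - c ^ 2) / (t * (c ^ 2 + (n t) ^ 2)) := by
      have : c ^ 2 + (n t) ^ 2 ≠ 0 := by positivity
      field_simp
      ring
    rw [key]
    have := sub_nonneg.2 hle
    positivity
  obtain ⟨t, hlog, htT⟩ := ((Real.tendsto_log_atTop.eventually_gt_atTop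
    ((Real.pi / 2 - (Real.arctan (n T / c) - c * Real.log T)) / c)).and
      (Filter.eventually_ge_atTop T)).exists
  have h1 : Real.arctan (n T / c) - c * Real.log T ≤ Real.arctan (n t / c) - c * Real.log t :=
    hmono Set.self_mem_Ici htT htT
  have h2 := Real.arctan_lt_pi_div_two (n t / c)
  rw [div_lt_iff₀ hc] at hlog
  linarith

theorem liminf_at_infinity_nonpos (A : ℝ) (hA : 0 < A) (n : ℝ → ℝ)
    (hd : ∀ t ∈ Set.Ioi A, DifferentiableAt ℝ n t) :
    Filter.liminf (fun t => t * deriv n t - (n t) ^ 2) Filter.atTop ≤ 0 := by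
  rw [Filter.liminf_eq]
  refine Real.sSup_le (fun a ha => ?_) le_rfl
  by_contra! hpos
  refine not_eventually_riccati A (Real.sqrt a) (Real.sqrt_pos.2 hpos) n hd ?_
  rw [Real.sq_sqrt hpos.le]
  exact ha
end
end

section
/- Let W : (0,∞) → (0,∞) be continuous with ∫₁^∞ W(s) s⁻³ ds < ∞, and define y : (0,∞) → (0,∞) by y(r) = ( ∫_r^∞ (s + W(s)) s⁻³ ds )^{−1}. Then y is a strictly increasing bijection of (0,∞) onto (0,∞), and, with V : (0,∞) → (0,∞) the function determined by V(y(r)) = W(r) r⁴ / ( y(r)² (W(r) + r) ) for all r > 0, the following two assertions are equivalent: (i) for every smooth compactly supported u : (0,∞) → ℝ, ∫₀^∞ ( r³/(r + W(r)) ) |u'(r)|² dr ≥ ∫₀^∞ W(r) r |u(r)|² dr; (ii) for every smooth compactly supported q : (0,∞) → ℝ, ∫₀^∞ y² |q'(y)|² dy ≥ ∫₀^∞ V(y) |q(y)|² dy. -/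
/-!
Write `G r = ∫_r^∞ (s + W s) s⁻³ ds`, so that `y = 1 / G` and `y' r = y² (r + W r) / r³ > 0`.
Since `1 / r ≤ G r` and `G → 0` at infinity, `y` is an increasing `C¹` bijection of `(0,∞)`
(`inv_le_tailG`, `hasDerivAt_tailG`, `tendsto_tailG`). For `u = q ∘ y` the substitution `t = y r`
turns `∫ V q² dt` into `∫ W r u² dr`, as `V (y r) y' r = W r · r`, and `∫ t² q'² dt` into
`∫ r³ / (r + W r) u'² dr`, as `y² / y' = r³ / (r + W r)`.

Because `W` is only continuous, `y` is only `C¹`, and the substitution takes smooth test functions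
to `C¹` ones (`IsC1Test.comp`). The gap is filled by `ineq_of_smooth`: mollification extends either
inequality from smooth to `C¹` compactly supported functions, the weights being continuous on
`(0,∞)`.
-/

open MeasureTheory Real Filter Set

noncomputable section

/-! ### From smooth to `C¹` test functions -/

/-- A `C¹` function supported in a compact subinterval of `(0,∞)`; vanishing off `[a, b]` is used
in place of a condition on `tsupport` because it passes directly through changes of variable. -/
def IsC1Test (u : ℝ → ℝ) : Prop :=
  ContDiff ℝ 1 u ∧ ∃ a b : ℝ, 0 < a ∧ ∀ x ∉ Icc a b, u x = 0

lemma IsC1Test.of_smooth {u : ℝ → ℝ} (hu : ContDiff ℝ (⊤ : ℕ∞) u) (hc : HasCompactSupport u)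
    (hs : tsupport u ⊆ Ioi 0) : IsC1Test u := by
  refine ⟨hu.of_le (by exact_mod_cast le_top), ?_⟩
  rcases (tsupport u).eq_empty_or_nonempty with h | h
  · refine ⟨1, 1, one_pos, fun x _ => image_eq_zero_of_notMem_tsupport ?_⟩
    rw [h]; exact notMem_empty x
  · obtain ⟨a, ha⟩ := IsCompact.exists_isLeast hc h
    obtain ⟨b, hb⟩ := IsCompact.exists_isGreatest hc h
    refine ⟨a, b, hs ha.1, fun x hx => image_eq_zero_of_notMem_tsupport fun hx' => hx ?_⟩
    exact ⟨ha.2 hx', hb.2 hx'⟩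

lemma tsupport_subset_Icc {u : ℝ → ℝ} {a b : ℝ} (h : ∀ x ∉ Icc a b, u x = 0) :
    tsupport u ⊆ Icc a b :=
  closure_minimal (fun x hx => by_contra fun hx' => hx (h x hx')) isClosed_Icc

lemma deriv_eq_zero_off_Icc {u : ℝ → ℝ} {a b : ℝ} (h : ∀ x ∉ Icc a b, u x = 0) :
    ∀ x ∉ Icc a b, deriv u x = 0 := fun _ hx =>
  image_eq_zero_of_notMem_tsupport fun hx' =>
    hx (tsupport_subset_Icc h (tsupport_deriv_subset hx'))

/-- Mollification: a `C¹` function supported in `[a, b]` is `C¹`-uniformly close to smooth functions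
supported in `[a/2, b+1]`. -/
lemma exists_smooth_approx {u : ℝ → ℝ} {a b : ℝ} (hu : ContDiff ℝ 1 u) (ha : 0 < a)
    (h0 : ∀ x ∉ Icc a b, u x = 0) {ε : ℝ} (hε : 0 < ε) :
    ∃ v : ℝ → ℝ, ContDiff ℝ (⊤ : ℕ∞) v ∧ (∀ x ∉ Icc (a / 2) (b + 1), v x = 0) ∧
      (∀ x, |v x - u x| ≤ ε) ∧ ∀ x, |deriv v x - deriv u x| ≤ ε := by
  have hcu : HasCompactSupport u :=
    isCompact_Icc.of_isClosed_subset (isClosed_tsupport _) (tsupport_subset_Icc h0)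
  have hcont : Continuous (deriv u) := hu.continuous_deriv le_rfl
  obtain ⟨δ₁, hδ₁, h₁⟩ := Metric.uniformContinuous_iff.mp
    (hcu.uniformContinuous_of_continuous hu.continuous) ε hε
  obtain ⟨δ₂, hδ₂, h₂⟩ := Metric.uniformContinuous_iff.mp
    (hcu.deriv.uniformContinuous_of_continuous hcont) ε hε
  obtain ⟨δ, hδ, hl₁, hl₂, hl₃, hl₄⟩ :
      ∃ δ : ℝ, 0 < δ ∧ δ ≤ δ₁ ∧ δ ≤ δ₂ ∧ δ ≤ a / 2 ∧ δ ≤ 1 :=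
    ⟨min (min δ₁ δ₂) (min (a / 2) 1), by positivity, by simp, by simp, by simp, by simp⟩
  let φ : ContDiffBump (0 : ℝ) := ⟨δ / 2, δ, half_pos hδ, half_lt_self hδ⟩
  have key : ∀ g : ℝ → ℝ, Continuous g → ∀ x η : ℝ,
      (∀ z, dist z x < δ → dist (g z) (g x) ≤ η) →
      dist ((convolution (φ.normed volume) g (ContinuousLinearMap.lsmul ℝ ℝ) volume) x) (g x)
        ≤ η := fun g hg x η h =>
    φ.dist_normed_convolution_le hg.aestronglyMeasurable fun z hz => h z hz
  refine ⟨convolution (φ.normed volume) u (ContinuousLinearMap.lsmul ℝ ℝ) volume, ?_, ?_, ?_, ?_⟩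
  · exact φ.hasCompactSupport_normed.contDiff_convolution_left _ φ.contDiff_normed
      hu.continuous.locallyIntegrable
  · intro x hx
    have hz : ∀ z, dist z x < δ → u z = 0 := by
      intro z hz
      apply h0
      contrapose! hx
      rw [Real.dist_eq, abs_lt] at hz
      constructor <;> linarith [hx.1, hx.2]
    have hx0 : u x = 0 := hz x (by simpa using hδ)
    have := key u hu.continuous x 0 fun z hzx => by rw [hz z hzx, hx0, dist_self]
    rw [hx0] at this
    exact dist_le_zero.mp this
  · intro x
    rw [← Real.dist_eq]
    exact key u hu.continuous x ε fun z hz => (h₁ (hz.trans_le hl₁)).le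
  · intro x
    rw [(hcu.hasDerivAt_convolution_right (ContinuousLinearMap.lsmul ℝ ℝ)
      (φ.continuous_normed.locallyIntegrable) hu x).deriv, ← Real.dist_eq]
    exact key (deriv u) hcont x ε fun z hz => (h₂ (hz.trans_le hl₂)).le

/-- Weighted square integrals are continuous under uniform convergence with supports in a fixed
compact subinterval of `(0,∞)`. -/
lemma tendsto_weighted_sq {f g : ℝ → ℝ} {v : ℕ → ℝ → ℝ} {a b : ℝ} (ha : 0 < a)
    (hf : ContinuousOn f (Ioi 0)) (hg : Continuous g) (hv : ∀ n, Continuous (v n))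
    (h0 : ∀ n, ∀ x ∉ Icc a b, v n x = 0) (hn : ∀ n x, |v n x - g x| ≤ 1 / ((n : ℝ) + 1)) :
    Tendsto (fun n => ∫ x in Ioi (0 : ℝ), f x * v n x ^ 2) atTop
      (nhds (∫ x in Ioi (0 : ℝ), f x * g x ^ 2)) := by
  obtain ⟨M, hM⟩ := isCompact_Icc.exists_bound_of_continuousOn (hg.continuousOn (s := Icc a b))
  have hsub : Icc a b ⊆ Ioi 0 := fun x hx => ha.trans_le hx.1
  apply tendsto_integral_of_dominated_convergence
    (bound := (Icc a b).indicator fun x => |f x| * (M + 1) ^ 2)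
  · intro n
    exact (hf.mul ((hv n).pow 2).continuousOn).aestronglyMeasurable measurableSet_Ioi
  · refine Integrable.integrableOn ?_
    rw [integrable_indicator_iff measurableSet_Icc]
    exact ((hf.mono hsub).abs.mul continuousOn_const).integrableOn_Icc
  · refine fun n => Eventually.of_forall fun x => ?_
    by_cases hx : x ∈ Icc a b
    · rw [indicator_of_mem hx, Real.norm_eq_abs, abs_mul, abs_pow]
      have h1 : 1 / ((n : ℝ) + 1) ≤ 1 := by
        rw [div_le_one (by positivity)]
        linarith [Nat.cast_nonneg (α := ℝ) n]
      have h2 : |v n x| ≤ M + 1 := by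
        have := abs_add_le (v n x - g x) (g x)
        rw [sub_add_cancel] at this
        have h3 := hM x hx
        rw [Real.norm_eq_abs] at h3
        linarith [hn n x]
      gcongr
    · rw [indicator_of_notMem hx, h0 n x hx]; simp
  · refine Eventually.of_forall fun x => ?_
    have : Tendsto (fun n => v n x) atTop (nhds (g x)) := by
      rw [tendsto_iff_dist_tendsto_zero]
      exact squeeze_zero (fun _ => dist_nonneg) (fun n => hn n x)
        tendsto_one_div_add_atTop_nhds_zero_nat
    exact (this.pow 2).const_mul _

/-- A weighted Hardy inequality known for smooth test functions holds for `C¹` ones. -/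
lemma ineq_of_smooth {A B : ℝ → ℝ} (hA : ContinuousOn A (Ioi 0)) (hB : ContinuousOn B (Ioi 0))
    (h : ∀ u : ℝ → ℝ, ContDiff ℝ (⊤ : ℕ∞) u → HasCompactSupport u → tsupport u ⊆ Ioi 0 →
      ∫ r in Ioi (0 : ℝ), A r * u r ^ 2 ≤ ∫ r in Ioi (0 : ℝ), B r * deriv u r ^ 2)
    {u : ℝ → ℝ} (hu : IsC1Test u) :
    ∫ r in Ioi (0 : ℝ), A r * u r ^ 2 ≤ ∫ r in Ioi (0 : ℝ), B r * deriv u r ^ 2 := by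
  obtain ⟨hu, a, b, ha, h0⟩ := hu
  choose v hv hv0 hvu hvd using fun n : ℕ =>
    exists_smooth_approx hu ha h0 (ε := 1 / ((n : ℝ) + 1)) (by positivity)
  have ha2 : 0 < a / 2 := half_pos ha
  refine le_of_tendsto_of_tendsto'
    (tendsto_weighted_sq ha2 hA hu.continuous (fun n => (hv n).continuous) hv0 hvu)
    (tendsto_weighted_sq ha2 hB (hu.continuous_deriv le_rfl)
      (fun n => (hv n).continuous_deriv (by exact_mod_cast le_top))
      (fun n => deriv_eq_zero_off_Icc (hv0 n)) hvd) fun n => h (v n) (hv n) ?_ ?_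
  · exact isCompact_Icc.of_isClosed_subset (isClosed_tsupport _) (tsupport_subset_Icc (hv0 n))
  · exact (tsupport_subset_Icc (hv0 n)).trans fun x hx => ha2.trans_le hx.1

/-! ### Changes of variable of the half-line -/

/-- `C¹` test functions are preserved by an increasing `C¹` change of variable of `(0,∞)`. -/
lemma IsC1Test.comp {q ψ ψ' : ℝ → ℝ} (hq : IsC1Test q) (hmono : StrictMonoOn ψ (Ioi 0))
    (hbij : BijOn ψ (Ioi 0) (Ioi 0)) (hd : ∀ x > 0, HasDerivAt ψ (ψ' x) x)
    (hc : ContinuousOn ψ' (Ioi 0)) : IsC1Test ((Ioi 0).indicator (q ∘ ψ)) := by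
  obtain ⟨hq, a, b, ha, h0⟩ := hq
  obtain ⟨α, hα, rfl⟩ := hbij.surjOn ha
  -- The right endpoint is enlarged so that it has a preimage even when `b ≤ 0`.
  obtain ⟨β, hβ, hβb⟩ := hbij.surjOn (mem_Ioi.mpr
    (lt_max_of_lt_right one_pos : (0 : ℝ) < max b 1))
  have hz : ∀ x ∉ Icc α β, (Ioi 0).indicator (q ∘ ψ) x = 0 := by
    intro x hx
    by_cases hx0 : x ∈ Ioi (0 : ℝ)
    · rw [indicator_of_mem hx0]
      apply h0
      contrapose! hx
      exact ⟨(hmono.le_iff_le hα hx0).mp hx.1,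
        (hmono.le_iff_le hx0 hβ).mp (hβb ▸ hx.2.trans (le_max_left _ _))⟩
    · exact indicator_of_notMem hx0 _
  refine ⟨?_, α, β, hα, hz⟩
  have hψ : ContDiffOn ℝ 1 ψ (Ioi 0) := by
    rw [show (1 : WithTop ℕ∞) = 0 + 1 from rfl, contDiffOn_succ_iff_deriv_of_isOpen isOpen_Ioi]
    refine ⟨fun x hx => (hd x hx).differentiableAt.differentiableWithinAt, by simp, ?_⟩
    rw [contDiffOn_zero]
    exact hc.congr fun x hx => (hd x hx).deriv
  rw [contDiff_iff_contDiffAt]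
  intro x
  by_cases hx : x ∈ Ioi (0 : ℝ)
  · refine (hq.contDiffAt.comp x (hψ.contDiffAt (isOpen_Ioi.mem_nhds hx))).congr_of_eventuallyEq ?_
    filter_upwards [isOpen_Ioi.mem_nhds hx] with t ht
    exact indicator_of_mem ht _
  · have hx' : x < α := lt_of_le_of_lt (not_lt.mp hx) hα
    refine contDiffAt_const (c := (0 : ℝ)) |>.congr_of_eventuallyEq ?_
    filter_upwards [isOpen_Iio.mem_nhds hx'] with t ht
    exact hz t fun h => absurd ht (not_lt.mpr h.1)

/-- The inverse of an increasing `C¹` bijection of `(0,∞)` with positive derivative is another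
increasing `C¹` bijection. -/
lemma exists_C1_inverse {y y' : ℝ → ℝ} (hmono : StrictMonoOn y (Ioi 0))
    (hbij : BijOn y (Ioi 0) (Ioi 0)) (hd : ∀ x > 0, HasDerivAt y (y' x) x)
    (hc : ContinuousOn y' (Ioi 0)) (hp : ∀ x > 0, 0 < y' x) :
    ∃ z z' : ℝ → ℝ, StrictMonoOn z (Ioi 0) ∧ BijOn z (Ioi 0) (Ioi 0) ∧
      (∀ t > 0, HasDerivAt z (z' t) t) ∧ ContinuousOn z' (Ioi 0) ∧
      (∀ t > 0, y (z t) = t) ∧ ∀ r > 0, z (y r) = r := by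
  have hinv := hbij.invOn_invFunOn
  set z := Function.invFunOn y (Ioi 0)
  have hzbij : BijOn z (Ioi 0) (Ioi 0) :=
    hinv.symm.bijOn hbij.surjOn.mapsTo_invFunOn hbij.mapsTo
  have hzm : StrictMonoOn z (Ioi 0) := by
    intro s hs t ht hst
    rw [← hmono.lt_iff_lt (hzbij.mapsTo hs) (hzbij.mapsTo ht), hinv.2 hs, hinv.2 ht]
    exact hst
  have hzc : ∀ t > 0, ContinuousAt z t := by
    intro t ht
    refine hzm.continuousAt_of_image_mem_nhds (isOpen_Ioi.mem_nhds ht) ?_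
    rw [hzbij.image_eq]
    exact isOpen_Ioi.mem_nhds (hzbij.mapsTo ht)
  refine ⟨z, fun t => (y' (z t))⁻¹, hzm, hzbij, ?_, ?_, fun t ht => hinv.2 ht,
    fun r hr => hinv.1 hr⟩
  · intro t ht
    refine HasDerivAt.of_local_left_inverse (hzc t ht) (hd _ (hzbij.mapsTo ht))
      (hp _ (hzbij.mapsTo ht)).ne' ?_
    filter_upwards [isOpen_Ioi.mem_nhds ht] with s hs using hinv.2 hs
  · exact (hc.comp (fun t ht => (hzc t ht).continuousWithinAt) hzbij.mapsTo).inv₀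
      fun t ht => (hp _ (hzbij.mapsTo ht)).ne'

lemma integral_comp_bij {y y' : ℝ → ℝ} (hbij : BijOn y (Ioi 0) (Ioi 0))
    (hd : ∀ x > 0, HasDerivAt y (y' x) x) (hp : ∀ x > 0, 0 < y' x) (g : ℝ → ℝ) :
    ∫ t in Ioi (0 : ℝ), g t = ∫ r in Ioi (0 : ℝ), y' r * g (y r) := by
  have := integral_image_eq_integral_abs_deriv_smul measurableSet_Ioi
    (fun x hx => (hd x hx).hasDerivWithinAt) hbij.injOn g
  rw [hbij.image_eq] at this
  rw [this]
  refine setIntegral_congr_fun measurableSet_Ioi fun x hx => ?_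
  simp only [smul_eq_mul, abs_of_pos (hp x hx)]

/-! ### The tail integral -/

section Weight

variable {W : ℝ → ℝ}

lemma integrableOn_density (hc : ContinuousOn W (Ioi 0))
    (hint : IntegrableOn (fun s => W s / s ^ 3) (Ioi 1)) {r : ℝ} (hr : 0 < r) :
    IntegrableOn (fun s => W s / s ^ 3) (Ioi r) := by
  have hsub : Icc r 1 ⊆ Ioi 0 := fun x hx => hr.trans_le hx.1
  have h1 : IntegrableOn (fun s => W s / s ^ 3) (Icc r 1) :=
    ((hc.mono hsub).div (continuousOn_id.pow 3)
      fun x hx => pow_ne_zero 3 (ne_of_gt (hsub hx))).integrableOn_Icc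
  refine (h1.union hint).mono_set fun x hx => ?_
  rcases le_or_gt x 1 with h | h
  · exact Or.inl ⟨le_of_lt hx, h⟩
  · exact Or.inr h

lemma integral_inv_sq {r : ℝ} (hr : 0 < r) :
    IntegrableOn (fun s : ℝ => s / s ^ 3) (Ioi r) ∧ ∫ s in Ioi r, s / s ^ 3 = r⁻¹ := by
  have hcongr : EqOn (fun s : ℝ => s ^ (-2 : ℝ)) (fun s => s / s ^ 3) (Ioi r) := by
    intro s hs
    have hs0 : (0 : ℝ) < s := hr.trans hs
    simp only
    rw [Real.rpow_neg hs0.le, Real.rpow_ofNat]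
    field_simp
  refine ⟨(integrableOn_Ioi_rpow_of_lt (by norm_num) hr).congr_fun hcongr measurableSet_Ioi, ?_⟩
  rw [← setIntegral_congr_fun measurableSet_Ioi hcongr, integral_Ioi_rpow_of_lt (by norm_num) hr,
    show (-2 : ℝ) + 1 = -1 by norm_num, Real.rpow_neg_one]
  ring

/-- The integral `∫_r^∞ (s + W(s)) s⁻³ ds`, whose reciprocal is the new variable. -/
def tailG (W : ℝ → ℝ) (r : ℝ) : ℝ := ∫ s in Ioi r, (s + W s) / s ^ 3

lemma integrableOn_tail (hc : ContinuousOn W (Ioi 0))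
    (hint : IntegrableOn (fun s => W s / s ^ 3) (Ioi 1)) {r : ℝ} (hr : 0 < r) :
    IntegrableOn (fun s => (s + W s) / s ^ 3) (Ioi r) :=
  ((integral_inv_sq hr).1.add (integrableOn_density hc hint hr)).congr
    (Eventually.of_forall fun s => by simp [add_div])

lemma inv_le_tailG (hc : ContinuousOn W (Ioi 0)) (hpos : ∀ s > (0 : ℝ), 0 < W s)
    (hint : IntegrableOn (fun s => W s / s ^ 3) (Ioi 1)) {r : ℝ} (hr : 0 < r) :
    r⁻¹ ≤ tailG W r := by
  rw [← (integral_inv_sq hr).2]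
  refine setIntegral_mono_on (integral_inv_sq hr).1 (integrableOn_tail hc hint hr)
    measurableSet_Ioi fun s hs => ?_
  have hs0 : (0 : ℝ) < s := hr.trans hs
  gcongr
  linarith [hpos s hs0]

lemma tailG_eq (hc : ContinuousOn W (Ioi 0))
    (hint : IntegrableOn (fun s => W s / s ^ 3) (Ioi 1)) {r : ℝ} (hr : 0 < r) :
    tailG W r = tailG W 1 - ∫ s in (1 : ℝ)..r, (s + W s) / s ^ 3 := by
  have := intervalIntegral.integral_interval_add_Ioi (integrableOn_tail hc hint one_pos)
    (integrableOn_tail hc hint hr)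
  unfold tailG
  linarith

lemma continuousOn_density (hc : ContinuousOn W (Ioi 0)) :
    ContinuousOn (fun s => (s + W s) / s ^ 3) (Ioi 0) :=
  (continuousOn_id.add hc).div (continuousOn_id.pow 3) fun _ hx => pow_ne_zero 3 (ne_of_gt hx)

lemma hasDerivAt_tailG (hc : ContinuousOn W (Ioi 0))
    (hint : IntegrableOn (fun s => W s / s ^ 3) (Ioi 1)) {r : ℝ} (hr : 0 < r) :
    HasDerivAt (tailG W) (-((r + W r) / r ^ 3)) r := by
  have hd := continuousOn_density hc
  have h1 : HasDerivAt (fun u => ∫ s in (1 : ℝ)..u, (s + W s) / s ^ 3) ((r + W r) / r ^ 3) r := by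
    refine intervalIntegral.integral_hasDerivAt_right ?_ ?_ ?_
    · refine (hd.mono fun x hx => ?_).intervalIntegrable
      exact lt_of_lt_of_le (lt_min one_pos hr) hx.1
    · exact hd.stronglyMeasurableAtFilter isOpen_Ioi r hr
    · exact hd.continuousAt (isOpen_Ioi.mem_nhds hr)
  refine (h1.const_sub (tailG W 1)).congr_of_eventuallyEq ?_
  filter_upwards [isOpen_Ioi.mem_nhds hr] with x hx using tailG_eq hc hint hx

lemma tendsto_tailG (hc : ContinuousOn W (Ioi 0))
    (hint : IntegrableOn (fun s => W s / s ^ 3) (Ioi 1)) :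
    Tendsto (tailG W) atTop (nhds 0) := by
  have h := (intervalIntegral_tendsto_integral_Ioi 1 (integrableOn_tail hc hint one_pos)
    tendsto_id).const_sub (tailG W 1)
  rw [show (∫ s in Ioi (1 : ℝ), (s + W s) / s ^ 3) = tailG W 1 from rfl, sub_self] at h
  refine h.congr' ?_
  filter_upwards [eventually_gt_atTop 0] with x hx using (tailG_eq hc hint hx).symm

end Weight

/-! ### The equivalence -/

theorem hardy_change_of_variables (W : ℝ → ℝ) (hc : ContinuousOn W (Set.Ioi 0))
    (hpos : ∀ s > (0 : ℝ), 0 < W s)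
    (hint : MeasureTheory.IntegrableOn (fun s => W s / s ^ 3) (Set.Ioi 1))
    (y : ℝ → ℝ) (hy : ∀ r > (0 : ℝ), y r = (∫ s in Set.Ioi r, (s + W s) / s ^ 3)⁻¹)
    (V : ℝ → ℝ)
    (hV : ∀ r > (0 : ℝ), V (y r) = W r * r ^ 4 / ((y r) ^ 2 * (W r + r))) :
    (StrictMonoOn y (Set.Ioi 0) ∧ Set.BijOn y (Set.Ioi 0) (Set.Ioi 0)) ∧
    ((∀ u : ℝ → ℝ, ContDiff ℝ (⊤ : ℕ∞) u → HasCompactSupport u →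
        tsupport u ⊆ Set.Ioi 0 →
        ∫ r in Set.Ioi (0 : ℝ), W r * r * (u r) ^ 2 ≤
          ∫ r in Set.Ioi (0 : ℝ), (r ^ 3 / (r + W r)) * (deriv u r) ^ 2) ↔
      (∀ q : ℝ → ℝ, ContDiff ℝ (⊤ : ℕ∞) q → HasCompactSupport q →
        tsupport q ⊆ Set.Ioi 0 →
        ∫ t in Set.Ioi (0 : ℝ), V t * (q t) ^ 2 ≤
          ∫ t in Set.Ioi (0 : ℝ), t ^ 2 * (deriv q t) ^ 2)) := by
  have hG : ∀ r > (0 : ℝ), 0 < tailG W r := fun r hr =>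
    (inv_pos.mpr hr).trans_le (inv_le_tailG hc hpos hint hr)
  have hyG : ∀ r > (0 : ℝ), y r = (tailG W r)⁻¹ := hy
  have hypos : ∀ r > (0 : ℝ), 0 < y r := fun r hr => hyG r hr ▸ inv_pos.mpr (hG r hr)
  have hsum : ∀ r > (0 : ℝ), 0 < r + W r := fun r hr => add_pos hr (hpos r hr)
  set y' : ℝ → ℝ := fun r => y r ^ 2 * ((r + W r) / r ^ 3) with hy'
  have hd : ∀ r > (0 : ℝ), HasDerivAt y (y' r) r := by
    intro r hr
    have h := (hasDerivAt_tailG hc hint hr).inv (hG r hr).ne'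
    have e : y =ᶠ[nhds r] (tailG W)⁻¹ := by
      filter_upwards [isOpen_Ioi.mem_nhds hr] with x hx using hyG x hx
    refine (h.congr_of_eventuallyEq e).congr_deriv ?_
    simp only [hy', hyG r hr]
    field_simp
  have hp : ∀ r > (0 : ℝ), 0 < y' r := fun r hr =>
    mul_pos (pow_pos (hypos r hr) 2) (div_pos (hsum r hr) (pow_pos hr 3))
  have hyc : ContinuousOn y (Ioi 0) := fun r hr => (hd r hr).continuousAt.continuousWithinAt
  have hc' : ContinuousOn y' (Ioi 0) := (hyc.pow 2).mul (continuousOn_density hc)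
  have hmono : StrictMonoOn y (Ioi 0) := by
    refine strictMonoOn_of_deriv_pos (convex_Ioi 0) hyc fun r hr => ?_
    rw [interior_Ioi] at hr
    rw [(hd r hr).deriv]
    exact hp r hr
  have hbij : BijOn y (Ioi 0) (Ioi 0) := by
    refine ⟨hypos, hmono.injOn, fun t ht => ?_⟩
    have ht0 : (0 : ℝ) < t := ht
    -- `y t ≤ t` because the tail integral dominates `1 / t`; `y` exceeds `t` far out.
    have h1 : y t ≤ t := by
      rw [hyG t ht, inv_le_comm₀ (hG t ht) ht]
      exact inv_le_tailG hc hpos hint ht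
    obtain ⟨R, hR, hRt⟩ := (((tendsto_tailG hc hint).eventually_lt_const
      (inv_pos.mpr ht0)).and (eventually_ge_atTop t)).exists
    have hR0 : 0 < R := ht0.trans_le hRt
    have h2 : t ≤ y R := by
      rw [hyG R hR0, le_inv_comm₀ ht0 (hG R hR0)]
      exact hR.le
    have hsub : Icc t R ⊆ Ioi 0 := fun x hx => ht0.trans_le hx.1
    obtain ⟨r, hr, hrt⟩ := intermediate_value_Icc hRt (hyc.mono hsub) ⟨h1, h2⟩
    exact ⟨r, hsub hr, hrt⟩
  refine ⟨⟨hmono, hbij⟩, ?_⟩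
  obtain ⟨z, z', hzm, hzbij, hzd, hzc', hyz, hzy⟩ := exists_C1_inverse hmono hbij hd hc' hp
  have hzpos : ∀ t > (0 : ℝ), 0 < z t := fun t ht => hzbij.mapsTo ht
  have hzc : ContinuousOn z (Ioi 0) := fun t ht => (hzd t ht).continuousAt.continuousWithinAt
  have hVc : ContinuousOn V (Ioi 0) := by
    have hWz : ContinuousOn (fun t => W (z t)) (Ioi 0) := hc.comp hzc hzbij.mapsTo
    have : ContinuousOn (fun t => W (z t) * z t ^ 4 / (t ^ 2 * (W (z t) + z t))) (Ioi 0) := by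
      refine (hWz.mul (hzc.pow 4)).div ((continuousOn_id.pow 2).mul (hWz.add hzc)) fun t ht => ?_
      have ht0 : (0 : ℝ) < t := ht
      have := hpos _ (hzpos t ht)
      have := hzpos t ht
      positivity
    refine this.congr fun t ht => ?_
    have := hV (z t) (hzpos t ht)
    rwa [hyz t ht] at this
  have hAc : ContinuousOn (fun r => W r * r) (Ioi 0) := hc.mul continuousOn_id
  have hBc : ContinuousOn (fun r => r ^ 3 / (r + W r)) (Ioi 0) :=
    (continuousOn_id.pow 3).div (continuousOn_id.add hc) fun r hr => (hsum r hr).ne'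
  have hBc' : ContinuousOn (fun t : ℝ => t ^ 2) (Ioi 0) := continuousOn_id.pow 2
  -- If `u = q ∘ y` on `(0,∞)`, the substitution `t = y r` matches the potential terms (`hpot`) and
  -- the kinetic terms (`hkin`) of the two inequalities.
  have hpot : ∀ u q : ℝ → ℝ, (∀ r > 0, u r = q (y r)) →
      ∫ t in Ioi (0 : ℝ), V t * q t ^ 2 = ∫ r in Ioi (0 : ℝ), W r * r * u r ^ 2 := by
    intro u q huq
    rw [integral_comp_bij hbij hd hp]
    refine setIntegral_congr_fun measurableSet_Ioi fun r hr => ?_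
    have h1 := hypos r hr
    have h2 := hsum r hr
    have hr0 : (0 : ℝ) < r := hr
    have h3 : 0 < W r + r := by linarith
    simp only [hV r hr, huq r hr, hy']
    rw [add_comm r (W r)]
    field_simp
  have hkin : ∀ u q : ℝ → ℝ, Differentiable ℝ q → (∀ r > 0, u r = q (y r)) →
      ∫ t in Ioi (0 : ℝ), t ^ 2 * deriv q t ^ 2 =
        ∫ r in Ioi (0 : ℝ), (r ^ 3 / (r + W r)) * deriv u r ^ 2 := by
    intro u q hq huq
    rw [integral_comp_bij hbij hd hp]
    refine setIntegral_congr_fun measurableSet_Ioi fun r hr => ?_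
    have hdu : HasDerivAt u (deriv q (y r) * y' r) r := by
      refine ((hq (y r)).hasDerivAt.comp r (hd r hr)).congr_of_eventuallyEq ?_
      filter_upwards [isOpen_Ioi.mem_nhds hr] with x hx using huq x hx
    have h2 := hsum r hr
    have hr0 : (0 : ℝ) < r := hr
    simp only [hdu.deriv, hy']
    field_simp
  constructor
  · intro h q hq hqc hqs
    have hq1 := IsC1Test.of_smooth hq hqc hqs
    have huq : ∀ r > (0 : ℝ), (Ioi 0).indicator (q ∘ y) r = q (y r) :=
      fun r hr => indicator_of_mem (show r ∈ Ioi (0 : ℝ) from hr) _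
    rw [hpot _ q huq, hkin _ q (hq1.1.differentiable one_ne_zero) huq]
    exact ineq_of_smooth hAc hBc h (hq1.comp hmono hbij hd hc')
  · intro h u hu huc hus
    have hq1 := (IsC1Test.of_smooth hu huc hus).comp hzm hzbij hzd hzc'
    have huq : ∀ r > (0 : ℝ), u r = (Ioi 0).indicator (u ∘ z) (y r) := fun r hr => by
      rw [indicator_of_mem (show y r ∈ Ioi (0 : ℝ) from hypos r hr), Function.comp_apply, hzy r hr]
    rw [← hpot u _ huq, ← hkin u _ (hq1.1.differentiable one_ne_zero) huq]
    exact ineq_of_smooth hVc hBc' h hq1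
end
end
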